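/- arXiv:math/0312145 — 2 statements merged into one kernel-verified Lean document; each statement's English description precedes it below -/
import Mathlib

section
/- Let H be a finite-dimensional complex vector space with a real structure c, carrying a Hodge structure of weight k and a horizontal (sl₂)²-action defined over ℝ. Then H is the internal direct sum of a finite family of invariant irreducible subspaces. -/
/-- A Hodge structure of weight `k` on a finite-dimensional complex vector space `H`
with real structure `c`, together with a horizontal `(𝔰𝔩₂)²`-action defined over `ℝ`. -/
structure HorizontalSL2Data (H : Type*) [AddCommGroup H] [Module ℂ H] where
  /-- The real structure: a conjugate-linear involution. -/
  c : H →ₛₗ[starRingEnd ℂ] H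
  c_invol : ∀ x, c (c x) = x
  /-- The weight. -/
  k : ℤ
  /-- The Hodge pieces `H^{p,q}` with `q = k - p`, indexed by `p`. -/
  Hpq : ℤ → Submodule ℂ H
  internal : DirectSum.IsInternal Hpq
  conj_mem : ∀ p : ℤ, ∀ x ∈ Hpq p, c x ∈ Hpq (k - p)
  /-- The raising operators `N_j⁺`. -/
  Np : Fin 2 → Module.End ℂ H
  /-- The lowering operators `N_j⁻`. -/
  Nm : Fin 2 → Module.End ℂ H
  /-- The semisimple operators `Y_j`. -/
  Y : Fin 2 → Module.End ℂ H
  c_comm_Np : ∀ (j : Fin 2) (x : H), c (Np j x) = Np j (c x)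
  c_comm_Nm : ∀ (j : Fin 2) (x : H), c (Nm j x) = Nm j (c x)
  c_comm_Y : ∀ (j : Fin 2) (x : H), c (Y j x) = Y j (c x)
  sl2_YNp : ∀ j, Y j * Np j - Np j * Y j = (2 : ℂ) • Np j
  sl2_YNm : ∀ j, Y j * Nm j - Nm j * Y j = (-2 : ℂ) • Nm j
  sl2_NpNm : ∀ j, Np j * Nm j - Nm j * Np j = Y j
  factors_commute : ∀ j j' : Fin 2, j ≠ j' →
    Commute (Np j) (Np j') ∧ Commute (Np j) (Nm j') ∧ Commute (Np j) (Y j') ∧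
    Commute (Nm j) (Np j') ∧ Commute (Nm j) (Nm j') ∧ Commute (Nm j) (Y j') ∧
    Commute (Y j) (Np j') ∧ Commute (Y j) (Nm j') ∧ Commute (Y j) (Y j')
  horizontal_lower : ∀ (j : Fin 2) (p : ℤ), ∀ x ∈ Hpq p,
    (Np j + Nm j + Complex.I • Y j) x ∈ Hpq (p - 1)
  horizontal_raise : ∀ (j : Fin 2) (p : ℤ), ∀ x ∈ Hpq p,
    (Np j + Nm j - Complex.I • Y j) x ∈ Hpq (p + 1)
  horizontal_zero : ∀ (j : Fin 2) (p : ℤ), ∀ x ∈ Hpq p,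
    (Np j - Nm j) x ∈ Hpq p

/-- A subspace `U ⊆ H` is invariant if it is stable under the real structure and under
all six operators, and is graded by the Hodge decomposition. -/
def HorizontalSL2Data.IsInvariant {H : Type*} [AddCommGroup H] [Module ℂ H]
    (D : HorizontalSL2Data H) (U : Submodule ℂ H) : Prop :=
  (∀ x ∈ U, D.c x ∈ U) ∧
  (∀ j : Fin 2, ∀ x ∈ U, D.Np j x ∈ U) ∧
  (∀ j : Fin 2, ∀ x ∈ U, D.Nm j x ∈ U) ∧
  (∀ j : Fin 2, ∀ x ∈ U, D.Y j x ∈ U) ∧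
  U = ⨆ p : ℤ, U ⊓ D.Hpq p

/-- An invariant subspace is irreducible if it is nonzero and contains no invariant
subspaces other than `0` and itself. -/
def HorizontalSL2Data.IsIrreducible {H : Type*} [AddCommGroup H] [Module ℂ H]
    (D : HorizontalSL2Data H) (U : Submodule ℂ H) : Prop :=
  U ≠ ⊥ ∧ D.IsInvariant U ∧
  ∀ U' : Submodule ℂ H, D.IsInvariant U' → U' ≤ U → U' = ⊥ ∨ U' = U

set_option linter.unusedSectionVars false

section Sl2Aux
variable {M : Type*} [AddCommGroup M] [Module ℂ M] [FiniteDimensional ℂ M]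

/-- Relations of an `sl₂`-triple of endomorphisms. -/
def SlRel {A : Type*} [Ring A] [Algebra ℂ A] (e f h : A) : Prop :=
  h * e - e * h = (2 : ℂ) • e ∧ h * f - f * h = (-2 : ℂ) • f ∧ e * f - f * e = h

/-- The Casimir element. -/
def slCas {A : Type*} [Ring A] [Algebra ℂ A] (e f h : A) : A :=
  h * h + (2 : ℂ) • h + (4 : ℂ) • (f * e)

lemma SlRel.symm {A : Type*} [Ring A] [Algebra ℂ A] {e f h : A} (r : SlRel e f h) :
    SlRel f e (-h) := by
  obtain ⟨r1, r2, r3⟩ := r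
  refine ⟨?_, ?_, ?_⟩
  · rw [neg_mul, mul_neg, ← neg_sub', r2, neg_smul, neg_neg]
  · rw [neg_mul, mul_neg, ← neg_sub', r1, neg_smul]
  · rw [← r3, neg_sub]

lemma SlRel.cas_symm {A : Type*} [Ring A] [Algebra ℂ A] {e f h : A} (r : SlRel e f h) :
    slCas f e (-h) = slCas e f h := by
  obtain ⟨r1, r2, r3⟩ := r
  have : e * f = h + f * e := by rw [← r3]; abel
  simp only [slCas, this, neg_mul_neg, smul_add, smul_neg]
  module

lemma SlRel.comm_h {A : Type*} [Ring A] [Algebra ℂ A] {e f h : A} (r : SlRel e f h) :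
    Commute (slCas e f h) h := by
  obtain ⟨r1, r2, r3⟩ := r
  have h1 : h * e = e * h + (2 : ℂ) • e := by rw [← r1]; abel
  have h2 : h * f = f * h + (-2 : ℂ) • f := by rw [← r2]; abel
  have h3 : h * (f * e) = f * e * h := by
    rw [← mul_assoc, h2, add_mul, mul_assoc, h1, mul_add, smul_mul_assoc, mul_smul_comm,
      ← mul_assoc, add_assoc, ← add_smul]
    simp
  rw [Commute, SemiconjBy, slCas]
  simp only [add_mul, mul_add, smul_mul_assoc, mul_smul_comm, h3, mul_assoc]

lemma SlRel.comm_e {A : Type*} [Ring A] [Algebra ℂ A] {e f h : A} (r : SlRel e f h) :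
    Commute (slCas e f h) e := by
  obtain ⟨r1, r2, r3⟩ := r
  have h1 : h * e = e * h + (2 : ℂ) • e := by rw [← r1]; abel
  have h3 : e * (f * e) = f * e * e + h * e := by
    rw [← mul_assoc, ← add_mul]; congr 1; rw [← r3]; abel
  have h4 : h * h * e = e * (h * h) + (4 : ℂ) • (h * e) - (4 : ℂ) • e := by
    rw [mul_assoc, h1, mul_add, ← mul_assoc, h1, add_mul, mul_smul_comm, h1, smul_mul_assoc,
      mul_assoc]
    module
  rw [Commute, SemiconjBy, slCas]
  simp only [add_mul, mul_add, smul_mul_assoc, mul_smul_comm, h3, h4, smul_add]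
  rw [h1]
  module

lemma SlRel.comm_f {A : Type*} [Ring A] [Algebra ℂ A] {e f h : A} (r : SlRel e f h) :
    Commute (slCas e f h) f := by
  rw [← r.cas_symm]; exact r.symm.comm_e

lemma SlRel.eig {e f h : Module.End ℂ M} (r : SlRel e f h) (hn : IsNilpotent (slCas e f h))
    {v : M} (hv : v ≠ 0) {μ : ℂ} (hμ : h v = μ • v) : ∃ j : ℕ, μ = - (2 * (j : ℂ)) := by
  obtain ⟨r1, r2, r3⟩ := r
  have key : ∀ j : ℕ, h ((e ^ j) v) = (μ + 2 * j) • (e ^ j) v := by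
    intro j
    induction j with
    | zero => simpa using hμ
    | succ j ih =>
      have := congrArg (fun T : Module.End ℂ M => T ((e ^ j) v)) r1
      simp only [LinearMap.sub_apply, Module.End.mul_apply, LinearMap.smul_apply, ih, map_smul]
        at this
      rw [pow_succ', Module.End.mul_apply, eq_add_of_sub_eq this]
      push_cast
      module
  have hex : ∃ j : ℕ, (e ^ j) v = 0 := by
    by_contra! hc
    have hinj : Function.Injective (fun n : ℕ => μ + 2 * (n : ℂ)) := by
      intro a b hab; simpa using hab
    have hfin := Module.End.finite_hasEigenvalue h
    refine Set.infinite_of_injective_forall_mem hinj (s := {x | h.HasEigenvalue x}) ?_ hfin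
    intro n
    exact Module.End.hasEigenvalue_of_hasEigenvector
      ⟨Module.End.mem_eigenspace_iff.2 (key n), hc n⟩
  obtain ⟨j, hj1, hj2⟩ := Nat.exists_not_and_succ_of_not_zero_of_exists (p := fun j => (e ^ j) v = 0)
    (by simpa using hv) hex
  refine ⟨j, ?_⟩
  set w := (e ^ j) v with hw
  have hew : e w = 0 := by rw [hw, ← Module.End.mul_apply, ← pow_succ']; exact hj2
  have hhw := key j
  rw [← hw] at hhw
  set ν := μ + 2 * (j : ℂ) with hν
  have hC : slCas e f h w = (ν * ν + 2 * ν) • w := by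
    simp only [slCas, LinearMap.add_apply, Module.End.mul_apply, LinearMap.smul_apply, hew, hhw,
      map_smul, map_zero]
    module
  have hpoly : ν * ν + 2 * ν = 0 := by
    obtain ⟨n, hn⟩ := hn
    have : ∀ n : ℕ, (slCas e f h ^ n) w = (ν * ν + 2 * ν) ^ n • w := by
      intro n
      induction n with
      | zero => simp
      | succ n ih => rw [pow_succ', Module.End.mul_apply, ih, map_smul, hC, smul_smul, pow_succ]
    have h0 := this n
    rw [hn, LinearMap.zero_apply, eq_comm, smul_eq_zero_iff_left hj1] at h0
    exact eq_zero_of_pow_eq_zero h0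
  have hν0 : ν = 0 := by
    by_cases h0 : h = 0
    · rw [h0, LinearMap.zero_apply, eq_comm, smul_eq_zero_iff_left hj1] at hhw
      exact hhw
    · let : LieRing (Module.End ℂ M) := LieRing.ofAssociativeRing
      have t : IsSl2Triple h e f := by
        refine ⟨h0, r3, ?_, ?_⟩
        · rw [Ring.lie_def, r1, two_smul, two_smul]
        · rw [Ring.lie_def, r2, two_smul, neg_smul, two_smul]
      have P : t.HasPrimitiveVectorWith w ν := ⟨hj1, hhw, hew⟩
      obtain ⟨n, hn⟩ := P.exists_nat
      rw [hn] at hpoly ⊢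
      have : n * n + 2 * n = 0 := by exact_mod_cast hpoly
      have : n = 0 := by nlinarith
      simp [this]
  rw [hν] at hν0
  exact eq_neg_of_add_eq_zero_left hν0

lemma SlRel.e_eq_zero {e f h : Module.End ℂ M} (r : SlRel e f h)
    (hn : IsNilpotent (slCas e f h)) : e = 0 := by
  have hev : ∀ (μ : ℂ) (v : M), v ≠ 0 → h v = μ • v → μ = 0 := by
    intro μ v hv hμ
    obtain ⟨j, hj⟩ := r.eig hn hv hμ
    obtain ⟨i, hi⟩ := r.symm.eig (by rwa [r.cas_symm]) hv (μ := -μ) (by simp [hμ])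
    have : (j : ℂ) + i = 0 := by linear_combination (hj + hi) / 2
    have : j + i = 0 := by exact_mod_cast this
    have : j = 0 := by omega
    simp [hj, this]
  have htop : h.maxGenEigenspace 0 = ⊤ := by
    rw [← Module.End.iSup_maxGenEigenspace_eq_top h]
    refine le_antisymm (le_iSup (fun μ => h.maxGenEigenspace μ) 0) (iSup_le fun μ => ?_)
    by_cases h0 : μ = 0
    · rw [h0]
    · have : ¬ h.HasEigenvalue μ := by
        intro hμ
        obtain ⟨v, hv⟩ := hμ.exists_hasEigenvector
        exact h0 (hev μ v hv.2 hv.apply_eq_smul)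
      have h2 : h.eigenspace μ = ⊥ := by
        simpa [Module.End.hasEigenvalue_iff] using this
      intro x hx
      rw [Module.End.mem_maxGenEigenspace] at hx
      obtain ⟨k, hk⟩ := hx
      have hinj : Function.Injective (h - μ • (1 : Module.End ℂ M)) := by
        rw [← LinearMap.ker_eq_bot, ← h2, Module.End.eigenspace_def]
      have : x = 0 := by
        have hi : Function.Injective ((h - μ • (1 : Module.End ℂ M)) ^ k) := by
          rw [Module.End.coe_pow]; exact hinj.iterate k
        exact hi (by rw [hk, map_zero])
      simp [this]
  have hinj : Function.Injective (h - (2 : ℂ) • (1 : Module.End ℂ M)) := by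
    rw [injective_iff_map_eq_zero]
    intro v hv
    by_contra hv0
    have := hev 2 v hv0 (by simpa [sub_eq_zero] using hv)
    norm_num at this
  ext x
  have hx : x ∈ h.maxGenEigenspace 0 := by rw [htop]; trivial
  rw [Module.End.mem_maxGenEigenspace] at hx
  obtain ⟨k, hk⟩ := hx
  have hsc : SemiconjBy e h (h - (2 : ℂ) • (1 : Module.End ℂ M)) := by
    rw [SemiconjBy, sub_mul, smul_mul_assoc, one_mul, ← r.1]; abel
  have h3 := congrArg (fun T : Module.End ℂ M => T x) (hsc.pow_right k).eq
  simp only [Module.End.mul_apply] at h3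
  rw [zero_smul, sub_zero] at hk
  rw [hk, map_zero] at h3
  have hi : Function.Injective ((h - (2 : ℂ) • (1 : Module.End ℂ M)) ^ k) := by
    rw [Module.End.coe_pow]; exact hinj.iterate k
  exact hi (by rw [← h3, LinearMap.zero_apply, map_zero])

/-- Elements killed by a power of the Casimir are killed by `e`. -/
lemma SlRel.e_apply_eq_zero {e f h : Module.End ℂ M} (r : SlRel e f h) (n : ℕ) (x : M)
    (hx : (slCas e f h ^ n) x = 0) : e x = 0 := by
  set K := LinearMap.ker (slCas e f h ^ n) with hK
  have st : ∀ T : Module.End ℂ M, Commute (slCas e f h) T → ∀ y ∈ K, T y ∈ K := by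
    intro T hT y hy
    rw [hK, LinearMap.mem_ker] at hy ⊢
    rw [← Module.End.mul_apply, (hT.pow_left n).eq, Module.End.mul_apply, hy, map_zero]
  have r' : SlRel (e.restrict (st e r.comm_e)) (f.restrict (st f r.comm_f))
      (h.restrict (st h r.comm_h)) := by
    obtain ⟨r1, r2, r3⟩ := r
    refine ⟨?_, ?_, ?_⟩ <;> ext y
    · simpa using congrArg (fun T : Module.End ℂ M => T y) r1
    · simpa using congrArg (fun T : Module.End ℂ M => T y) r2
    · simpa using congrArg (fun T : Module.End ℂ M => T y) r3
  have hc : slCas (e.restrict (st e r.comm_e)) (f.restrict (st f r.comm_f))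
      (h.restrict (st h r.comm_h)) = (slCas e f h).restrict (st _ (Commute.refl _)) := by
    ext y
    simp [slCas]
  have := r'.e_eq_zero (by
    rw [hc]
    refine ⟨n, ?_⟩
    rw [Module.End.pow_restrict]
    ext y
    simp)
  simpa using congrArg (fun T : Module.End ℂ K => ((T ⟨x, hx⟩ : K) : M)) this

open Polynomial in
/-- The invariant projector as a polynomial in the Casimir. -/
lemma SlRel.exists_poly {e f h : Module.End ℂ M} (r : SlRel e f h) :
    ∃ q : ℂ[X], e * aeval (slCas e f h) (1 + X * q) = 0 ∧ f * aeval (slCas e f h) (1 + X * q) = 0 ∧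
      h * aeval (slCas e f h) (1 + X * q) = 0 := by
  set C := slCas e f h with hC
  have hm0 : minpoly ℂ C ≠ 0 := minpoly.ne_zero (Algebra.IsIntegral.isIntegral C)
  obtain ⟨g, hg1, hg2⟩ := Polynomial.exists_eq_pow_rootMultiplicity_mul_and_not_dvd _ hm0 0
  set n := (minpoly ℂ C).rootMultiplicity 0
  rw [C_0, sub_zero] at hg1 hg2
  rw [X_dvd_iff] at hg2
  have hg3 : C ^ n * aeval C g = 0 := by
    have := minpoly.aeval ℂ C
    rw [hg1] at this
    simpa using this
  obtain ⟨q, hq⟩ : ∃ q : ℂ[X], (g.coeff 0)⁻¹ • g = 1 + X * q := by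
    have : X ∣ (g.coeff 0)⁻¹ • g - 1 := by
      rw [X_dvd_iff]; simp [hg2]
    obtain ⟨q, hq⟩ := this
    exact ⟨q, by rw [← hq]; ring⟩
  have hk : C ^ n * aeval C (1 + X * q) = 0 := by
    rw [← hq, map_smul, mul_smul_comm, hg3, smul_zero]
  have he : e * aeval C (1 + X * q) = 0 := by
    ext x
    exact r.e_apply_eq_zero n _ (congrArg (fun T : Module.End ℂ M => T x) hk)
  have hf : f * aeval C (1 + X * q) = 0 := by
    ext x
    refine r.symm.e_apply_eq_zero n _ ?_
    rw [r.cas_symm]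
    exact (congrArg (fun T : Module.End ℂ M => T x) hk)
  refine ⟨q, he, hf, ?_⟩
  rw [← r.2.2, sub_mul, mul_assoc, mul_assoc, he, hf, mul_zero, mul_zero, sub_zero]

/-- The commutator action on endomorphisms. -/
def slAd (T : Module.End ℂ M) : Module.End ℂ (Module.End ℂ M) :=
  LinearMap.mulLeft ℂ T - LinearMap.mulRight ℂ T

lemma slAd_apply (T φ : Module.End ℂ M) : slAd T φ = T * φ - φ * T := rfl

lemma slAd_lie (a b : Module.End ℂ M) :
    slAd a * slAd b - slAd b * slAd a = slAd (a * b - b * a) := by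
  refine LinearMap.ext fun φ => ?_
  simp only [LinearMap.sub_apply, Module.End.mul_apply (slAd _), slAd_apply]
  noncomm_ring

lemma slAd_smul (c : ℂ) (a : Module.End ℂ M) : slAd (c • a) = c • slAd a := by
  refine LinearMap.ext fun φ => ?_
  simp only [LinearMap.smul_apply, slAd_apply, smul_sub, smul_mul_assoc, mul_smul_comm]

lemma SlRel.ad {e f h : Module.End ℂ M} (r : SlRel e f h) : SlRel (slAd e) (slAd f) (slAd h) := by
  obtain ⟨r1, r2, r3⟩ := r
  refine ⟨?_, ?_, ?_⟩
  · rw [slAd_lie, r1, slAd_smul]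
  · rw [slAd_lie, r2, slAd_smul]
  · rw [slAd_lie, r3]

lemma slAd_commute {a b : Module.End ℂ M} (hab : Commute a b) : Commute (slAd a) (slAd b) := by
  have := slAd_lie a b
  rw [hab.eq, sub_self] at this
  have h0 : slAd (0 : Module.End ℂ M) = 0 := by
    refine LinearMap.ext fun φ => ?_
    simp [slAd_apply]
  rw [h0] at this
  exact sub_eq_zero.1 this

/-- Endomorphisms with values in `U` that kill `U`. -/
def slT (U : Submodule ℂ M) : Submodule ℂ (Module.End ℂ M) where
  carrier := {φ | (∀ x, φ x ∈ U) ∧ ∀ u ∈ U, φ u = 0}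
  add_mem' := by
    rintro a b ⟨h1, h2⟩ ⟨h3, h4⟩
    exact ⟨fun x => U.add_mem (h1 x) (h3 x), fun u hu => by simp [h2 u hu, h4 u hu]⟩
  zero_mem' := ⟨fun x => U.zero_mem, fun u hu => rfl⟩
  smul_mem' := by
    rintro c a ⟨h1, h2⟩
    exact ⟨fun x => U.smul_mem c (h1 x), fun u hu => by simp [h2 u hu]⟩

/-- Projections onto `U`. -/
def IsProjOn (U : Submodule ℂ M) (φ : Module.End ℂ M) : Prop :=
  (∀ x, φ x ∈ U) ∧ ∀ u ∈ U, φ u = u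

lemma IsProjOn.add {U : Submodule ℂ M} {φ ψ : Module.End ℂ M} (h : IsProjOn U φ)
    (h' : ψ ∈ slT U) : IsProjOn U (φ + ψ) :=
  ⟨fun x => U.add_mem (h.1 x) (h'.1 x), fun u hu => by simp [h.2 u hu, h'.2 u hu]⟩

lemma slAd_mem_of_T {U : Submodule ℂ M} {a φ : Module.End ℂ M} (ha : ∀ x ∈ U, a x ∈ U)
    (h : φ ∈ slT U) : slAd a φ ∈ slT U := by
  refine ⟨fun x => ?_, fun u hu => ?_⟩
  · simp only [slAd_apply, LinearMap.sub_apply, Module.End.mul_apply]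
    exact U.sub_mem (ha _ (h.1 x)) (h.1 _)
  · simp only [slAd_apply, LinearMap.sub_apply, Module.End.mul_apply]
    rw [h.2 u hu, h.2 _ (ha u hu), map_zero, sub_zero]

lemma slAd_mem_of_proj {U : Submodule ℂ M} {a φ : Module.End ℂ M} (ha : ∀ x ∈ U, a x ∈ U)
    (h : IsProjOn U φ) : slAd a φ ∈ slT U := by
  refine ⟨fun x => ?_, fun u hu => ?_⟩
  · simp only [slAd_apply, LinearMap.sub_apply, Module.End.mul_apply]
    exact U.sub_mem (ha _ (h.1 x)) (h.1 _)
  · simp only [slAd_apply, LinearMap.sub_apply, Module.End.mul_apply]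
    rw [h.2 u hu, h.2 _ (ha u hu), sub_self]

lemma slCas_apply (e f h : Module.End ℂ M) (x : M) :
    slCas e f h x = h (h x) + (2 : ℂ) • h x + (4 : ℂ) • f (e x) := rfl

open Polynomial in
lemma IsProjOn.poly {U : Submodule ℂ M} {e f h : Module.End ℂ M} (he : ∀ x ∈ U, e x ∈ U)
    (hf : ∀ x ∈ U, f x ∈ U) (hh : ∀ x ∈ U, h x ∈ U) {φ : Module.End ℂ M} (hφ : IsProjOn U φ)
    (q : ℂ[X]) : IsProjOn U (aeval (slCas (slAd e) (slAd f) (slAd h)) (1 + X * q) φ) := by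
  set C := slCas (slAd e) (slAd f) (slAd h) with hC
  have h1 : C φ ∈ slT U := by
    rw [hC, slCas_apply]
    refine add_mem (add_mem ?_ ?_) ?_
    · exact slAd_mem_of_T hh (slAd_mem_of_proj hh hφ)
    · exact Submodule.smul_mem _ _ (slAd_mem_of_proj hh hφ)
    · exact Submodule.smul_mem _ _ (slAd_mem_of_T hf (slAd_mem_of_proj he hφ))
  have h2 : ∀ ψ ∈ slT U, C ψ ∈ slT U := by
    intro ψ hψ
    rw [hC, slCas_apply]
    refine add_mem (add_mem ?_ ?_) ?_
    · exact slAd_mem_of_T hh (slAd_mem_of_T hh hψ)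
    · exact Submodule.smul_mem _ _ (slAd_mem_of_T hh hψ)
    · exact Submodule.smul_mem _ _ (slAd_mem_of_T hf (slAd_mem_of_T he hψ))
  have h3 : ∀ n : ℕ, ∀ ψ ∈ slT U, (C ^ n) ψ ∈ slT U := by
    intro n
    induction n with
    | zero => intro ψ hψ; simpa using hψ
    | succ n ih => intro ψ hψ; rw [pow_succ, Module.End.mul_apply]; exact ih _ (h2 _ hψ)
  have h4 : ∀ q : ℂ[X], ∀ ψ ∈ slT U, aeval C q ψ ∈ slT U := by
    intro q ψ hψ
    induction q using Polynomial.induction_on' with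
    | add p q hp hq => rw [map_add, LinearMap.add_apply]; exact add_mem hp hq
    | monomial n a =>
      rw [aeval_monomial, Module.End.mul_apply, Module.algebraMap_end_apply]
      exact Submodule.smul_mem _ _ (h3 n _ hψ)
  rw [mul_comm, map_add, map_one, map_mul, aeval_X, LinearMap.add_apply, Module.End.mul_apply]
  exact hφ.add (h4 q _ h1)

open Polynomial in
/-- For two commuting `sl₂`-triples, each stable subspace has an equivariant projection. -/
lemma exists_equivariant_proj {e f h e' f' h' : Module.End ℂ M} (r : SlRel e f h)
    (r' : SlRel e' f' h')
    (cee : Commute e e') (cef : Commute e f') (ceh : Commute e h')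
    (cfe : Commute f e') (cff : Commute f f') (cfh : Commute f h')
    (che : Commute h e') (chf : Commute h f') (chh : Commute h h')
    (U : Submodule ℂ M) (he : ∀ x ∈ U, e x ∈ U)
    (hf : ∀ x ∈ U, f x ∈ U) (hh : ∀ x ∈ U, h x ∈ U) (he' : ∀ x ∈ U, e' x ∈ U)
    (hf' : ∀ x ∈ U, f' x ∈ U) (hh' : ∀ x ∈ U, h' x ∈ U) :
    ∃ φ : Module.End ℂ M, IsProjOn U φ ∧ Commute e φ ∧ Commute f φ ∧ Commute h φ ∧
      Commute e' φ ∧ Commute f' φ ∧ Commute h' φ := by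
  obtain ⟨g, hg⟩ := LinearMap.exists_leftInverse_of_injective U.subtype (by simp)
  have h0 : IsProjOn U (U.subtype ∘ₗ g) := by
    refine ⟨fun x => (g x).2, fun u hu => ?_⟩
    have := congrArg (fun T : U →ₗ[ℂ] U => ((T ⟨u, hu⟩ : U) : M)) hg
    simpa using this
  obtain ⟨q, hq1, hq2, hq3⟩ := r.ad.exists_poly
  obtain ⟨q', hq1', hq2', hq3'⟩ := r'.ad.exists_poly
  have h1 := h0.poly he' hf' hh' q'
  have h2 := h1.poly he hf hh q
  refine ⟨_, h2, ?_⟩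
  set C := slCas (slAd e) (slAd f) (slAd h) with hC
  set C' := slCas (slAd e') (slAd f') (slAd h') with hC'
  set φ₀ := U.subtype ∘ₗ g
  have k1 : ∀ (a : Module.End ℂ M), slAd a * aeval C (1 + X * q) = 0 →
      Commute a (aeval C (1 + X * q) (aeval C' (1 + X * q') φ₀)) := by
    intro a ha
    refine sub_eq_zero.1 ?_
    rw [← slAd_apply, ← Module.End.mul_apply, ha, LinearMap.zero_apply]
  have k2 : ∀ (a : Module.End ℂ M), Commute e a → Commute f a → Commute h a →
      slAd a * aeval C' (1 + X * q') = 0 →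
      Commute a (aeval C (1 + X * q) (aeval C' (1 + X * q') φ₀)) := by
    intro a hea hfa hha ha
    have hc : Commute (slAd a) C := by
      have hea := (slAd_commute hea).symm
      have hfa := (slAd_commute hfa).symm
      have hha := (slAd_commute hha).symm
      exact ((hha.mul_right hha).add_right (hha.smul_right _)).add_right
        ((hfa.mul_right hea).smul_right _)
    have hc2 : Commute (slAd a) (aeval C (1 + X * q)) := by
      generalize (1 + X * q) = p
      induction p using Polynomial.induction_on' with
      | add p q hp hq => rw [map_add]; exact hp.add_right hq
      | monomial n b =>
        rw [aeval_monomial]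
        exact (Algebra.commute_algebraMap_right b (slAd a)).mul_right (hc.pow_right n)
    refine sub_eq_zero.1 ?_
    rw [← slAd_apply, ← Module.End.mul_apply, hc2.eq, Module.End.mul_apply,
      ← Module.End.mul_apply (slAd a), ha, LinearMap.zero_apply, map_zero]
  exact ⟨k1 e hq1, k1 f hq2, k1 h hq3, k2 e' cee cfe che hq1', k2 f' cef cff chf hq2',
    k2 h' ceh cfh chh hq3'⟩

end Sl2Aux

section HodgeAux
variable {H : Type*} [AddCommGroup H] [Module ℂ H]

/-- Induction on homogeneous components. -/
lemma HorizontalSL2Data.hom_induction (D : HorizontalSL2Data H) {motive : H → Prop}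
    (h1 : ∀ p, ∀ x ∈ D.Hpq p, motive x) (h0 : motive 0)
    (ha : ∀ x y, motive x → motive y → motive (x + y)) (x : H) : motive x := by
  have hx : x ∈ ⨆ p, D.Hpq p := by rw [D.internal.submodule_iSup_eq_top]; trivial
  exact Submodule.iSup_induction D.Hpq (motive := motive) hx h1 h0 ha

/-- The Hodge projectors exist, and linear maps can be glued from Hodge pieces. -/
lemma HorizontalSL2Data.exists_projectors (D : HorizontalSL2Data H) :
    ∃ P : ℤ → Module.End ℂ H, (∀ p x, P p x ∈ D.Hpq p) ∧ (∀ p, ∀ x ∈ D.Hpq p, P p x = x) ∧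
      (∀ p p', p ≠ p' → ∀ x ∈ D.Hpq p', P p x = 0) ∧
      ∀ F : ℤ → Module.End ℂ H, ∃ φ : Module.End ℂ H, ∀ p, ∀ x ∈ D.Hpq p, φ x = F p x := by
  classical
  let E := LinearEquiv.ofBijective (DirectSum.coeLinearMap D.Hpq) D.internal
  have hE : ∀ p, ∀ x, ∀ hx : x ∈ D.Hpq p,
      E.symm x = DirectSum.lof ℂ ℤ (fun p => D.Hpq p) p ⟨x, hx⟩ := by
    intro p x hx
    rw [LinearEquiv.symm_apply_eq]
    change x = DirectSum.coeLinearMap D.Hpq _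
    rw [DirectSum.coeLinearMap_lof]
  refine ⟨fun p => (D.Hpq p).subtype ∘ₗ DirectSum.component ℂ ℤ (fun p => D.Hpq p) p ∘ₗ
    E.symm.toLinearMap, fun p x => Subtype.property _, ?_, ?_, ?_⟩
  · intro p x hx
    simp only [LinearMap.comp_apply, LinearEquiv.coe_coe, hE p x hx, DirectSum.component.lof_self,
      Submodule.subtype_apply]
  · intro p p' hp x hx
    simp only [LinearMap.comp_apply, LinearEquiv.coe_coe, hE p' x hx, DirectSum.component.of,
      dif_neg (Ne.symm hp), map_zero]
  · intro F
    refine ⟨DirectSum.toModule ℂ ℤ H (fun p => F p ∘ₗ (D.Hpq p).subtype) ∘ₗ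
      E.symm.toLinearMap, ?_⟩
    intro p x hx
    simp only [LinearMap.comp_apply, LinearEquiv.coe_coe, hE p x hx, DirectSum.toModule_lof,
      Submodule.subtype_apply]

/-- Stability under Hodge projectors implies being graded. -/
lemma HorizontalSL2Data.graded_of_proj (D : HorizontalSL2Data H) {P : ℤ → Module.End ℂ H}
    (hP1 : ∀ p x, P p x ∈ D.Hpq p) (hP2 : ∀ p, ∀ x ∈ D.Hpq p, P p x = x)
    (hP3 : ∀ p p', p ≠ p' → ∀ x ∈ D.Hpq p', P p x = 0) {U : Submodule ℂ H}
    (hU : ∀ p, ∀ u ∈ U, P p u ∈ U) : U = ⨆ p : ℤ, U ⊓ D.Hpq p := by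
  refine le_antisymm (fun x hx => ?_) (iSup_le fun p => inf_le_left)
  -- the element is the sum of its components
  have hdec : ∀ y : H, y ∈ Submodule.span ℂ (Set.range fun p => P p y) := by
    intro y
    have hfin : ∃ s : Finset ℤ, y = ∑ p ∈ s, P p y ∧ ∀ p ∉ s, P p y = 0 := by
      classical
      induction y using D.hom_induction with
      | h1 i y hy =>
        exact ⟨{i}, by simp [hP2 i y hy], fun p hp => hP3 p i (by simpa using hp) y hy⟩
      | h0 => exact ⟨∅, by simp⟩
      | ha y z hy hz =>
        obtain ⟨s, hs, hs'⟩ := hy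
        obtain ⟨t, ht, ht'⟩ := hz
        refine ⟨s ∪ t, ?_, fun p hp => ?_⟩
        · simp only [map_add, Finset.sum_add_distrib]
          rw [← Finset.sum_subset Finset.subset_union_left (fun p _ hp => hs' p hp),
            ← Finset.sum_subset Finset.subset_union_right (fun p _ hp => ht' p hp), ← hs, ← ht]
        · rw [Finset.notMem_union] at hp
          rw [map_add, hs' p hp.1, ht' p hp.2, add_zero]
    obtain ⟨s, hs, -⟩ := hfin
    rw [hs]
    refine Submodule.sum_mem _ fun p _ => ?_
    rw [← hs]
    exact Submodule.subset_span ⟨p, rfl⟩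
  refine (Submodule.span_le.2 ?_) (hdec x)
  rintro _ ⟨p, rfl⟩
  exact Submodule.mem_iSup_of_mem p ⟨hU p x hx, hP1 p x⟩

/-- Graded subspaces are stable under Hodge projectors. -/
lemma HorizontalSL2Data.proj_mem (D : HorizontalSL2Data H) {P : ℤ → Module.End ℂ H}
    (hP2 : ∀ p, ∀ x ∈ D.Hpq p, P p x = x)
    (hP3 : ∀ p p', p ≠ p' → ∀ x ∈ D.Hpq p', P p x = 0) {U : Submodule ℂ H}
    (hg : U = ⨆ p : ℤ, U ⊓ D.Hpq p) : ∀ p, ∀ u ∈ U, P p u ∈ U := by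
  intro p u hu
  rw [hg] at hu
  induction hu using Submodule.iSup_induction' with
  | mem i x hx =>
    by_cases hpi : p = i
    · subst hpi; rw [hP2 p x hx.2]; exact hx.1
    · rw [hP3 p i hpi x hx.2]; exact U.zero_mem
  | zero => rw [map_zero]; exact U.zero_mem
  | add x y _ _ hx hy => rw [map_add]; exact U.add_mem hx hy

/-- Every invariant subspace has an invariant complement. -/
lemma HorizontalSL2Data.exists_invariant_compl [FiniteDimensional ℂ H] (D : HorizontalSL2Data H)
    {U : Submodule ℂ H} (hU : D.IsInvariant U) : ∃ W, D.IsInvariant W ∧ IsCompl U W := by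
  obtain ⟨hc, hp, hm, hy, hg⟩ := hU
  obtain ⟨P, hP1, hP2, hP3, hglue⟩ := D.exists_projectors
  have hr : ∀ j, SlRel (D.Np j) (D.Nm j) (D.Y j) := fun j =>
    ⟨D.sl2_YNp j, D.sl2_YNm j, D.sl2_NpNm j⟩
  obtain ⟨c1, c2, c3, c4, c5, c6, c7, c8, c9⟩ := D.factors_commute 0 1 (by decide)
  obtain ⟨φ, hφ, k1, k2, k3, k4, k5, k6⟩ := exists_equivariant_proj (hr 0) (hr 1)
    c1 c2 c3 c4 c5 c6 c7 c8 c9 U (hp 0) (hm 0) (hy 0) (hp 1) (hm 1) (hy 1)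
  have ap : ∀ {S T : Module.End ℂ H}, Commute S T → ∀ x, S (T x) = T (S x) :=
    fun h x => congrArg (fun R : Module.End ℂ H => R x) h.eq
  have kp : ∀ j x, D.Np j (φ x) = φ (D.Np j x) := by
    intro j; fin_cases j; exacts [ap k1, ap k4]
  have km : ∀ j x, D.Nm j (φ x) = φ (D.Nm j x) := by
    intro j; fin_cases j; exacts [ap k2, ap k5]
  have ky : ∀ j x, D.Y j (φ x) = φ (D.Y j x) := by
    intro j; fin_cases j; exacts [ap k3, ap k6]
  -- average over the real structure
  obtain ⟨ψ, hψ⟩ : ∃ ψ : Module.End ℂ H, ∀ x, ψ x = (2⁻¹ : ℂ) • (φ x + D.c (φ (D.c x))) := by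
    refine ⟨(2⁻¹ : ℂ) • (φ + D.c.comp (φ.comp D.c)), fun x => rfl⟩
  have hψP : IsProjOn U ψ := by
    refine ⟨fun x => ?_, fun u hu => ?_⟩
    · rw [hψ]; exact U.smul_mem _ (U.add_mem (hφ.1 _) (hc _ (hφ.1 _)))
    · rw [hψ, hφ.2 u hu, hφ.2 _ (hc u hu), D.c_invol, ← two_smul ℂ u, smul_smul]; norm_num
  have lp : ∀ j x, D.Np j (ψ x) = ψ (D.Np j x) := by
    intro j x
    simp only [hψ, map_smul, map_add, kp, ← D.c_comm_Np]
  have lm : ∀ j x, D.Nm j (ψ x) = ψ (D.Nm j x) := by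
    intro j x
    simp only [hψ, map_smul, map_add, km, ← D.c_comm_Nm]
  have ly : ∀ j x, D.Y j (ψ x) = ψ (D.Y j x) := by
    intro j x
    simp only [hψ, map_smul, map_add, ky, ← D.c_comm_Y]
  have lc : ∀ x, D.c (ψ x) = ψ (D.c x) := by
    intro x
    simp only [hψ, LinearMap.map_smulₛₗ, map_add, D.c_invol, map_inv₀, map_ofNat]
    rw [add_comm]
  -- degree zero part
  obtain ⟨χ, hχ⟩ := hglue (fun p => P p * ψ)
  simp only [Module.End.mul_apply] at hχ
  have hPU := D.proj_mem hP2 hP3 hg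
  have hχP : IsProjOn U χ := by
    refine ⟨fun x => ?_, fun u hu => ?_⟩
    · induction x using D.hom_induction with
      | h1 p x hx => rw [hχ p x hx]; exact hPU _ _ (hψP.1 _)
      | h0 => rw [map_zero]; exact U.zero_mem
      | ha x y hx hy => rw [map_add]; exact U.add_mem hx hy
    · rw [hg] at hu
      induction hu using Submodule.iSup_induction' with
      | mem i x hx => rw [hχ i x hx.2, hψP.2 x hx.1, hP2 i x hx.2]
      | zero => rw [map_zero]
      | add x y _ _ hx hy => rw [map_add, hx, hy]
  have shift : ∀ (d : ℤ) (T : Module.End ℂ H), (∀ p, ∀ x ∈ D.Hpq p, T x ∈ D.Hpq (p + d)) →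
      (∀ x, T (ψ x) = ψ (T x)) → ∀ x, T (χ x) = χ (T x) := by
    intro d T hT hTψ
    have hPT : ∀ p x, P (p + d) (T x) = T (P p x) := by
      intro p x
      induction x using D.hom_induction with
      | h1 i x hx =>
        by_cases hpi : p = i
        · subst hpi; rw [hP2 p x hx, hP2 _ _ (hT p x hx)]
        · rw [hP3 p i hpi x hx, hP3 (p + d) (i + d) (by omega) _ (hT i x hx), map_zero]
      | h0 => simp
      | ha x y hx hy => simp only [map_add, hx, hy]
    intro x
    induction x using D.hom_induction with
    | h1 p x hx => rw [hχ p x hx, hχ (p + d) _ (hT p x hx), ← hTψ, hPT]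
    | h0 => simp
    | ha x y hx hy => simp only [map_add, hx, hy]
  have hA : ∀ j x, (D.Np j + D.Nm j + Complex.I • D.Y j) (χ x)
      = χ ((D.Np j + D.Nm j + Complex.I • D.Y j) x) := fun j =>
    shift (-1) _ (fun p x hx => D.horizontal_lower j p x hx) (fun x => by
      simp only [LinearMap.add_apply, LinearMap.smul_apply, lp, lm, ly, map_add, map_smul])
  have hB : ∀ j x, (D.Np j + D.Nm j - Complex.I • D.Y j) (χ x)
      = χ ((D.Np j + D.Nm j - Complex.I • D.Y j) x) := fun j =>
    shift 1 _ (fun p x hx => D.horizontal_raise j p x hx) (fun x => by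
      simp only [LinearMap.add_apply, LinearMap.sub_apply, LinearMap.smul_apply, lp, lm, ly,
        map_add, map_sub, map_smul])
  have hZ : ∀ j x, (D.Np j - D.Nm j) (χ x) = χ ((D.Np j - D.Nm j) x) := fun j =>
    shift 0 _ (fun p x hx => by rw [add_zero]; exact D.horizontal_zero j p x hx) (fun x => by
      simp only [LinearMap.sub_apply, lp, lm, map_sub])
  simp only [LinearMap.add_apply, LinearMap.sub_apply, LinearMap.smul_apply,
        map_add, map_sub, map_smul] at hA hB hZ
  have mp : ∀ j x, D.Np j (χ x) = χ (D.Np j x) := by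
    intro j x
    linear_combination (norm := module) (4⁻¹ : ℂ) • hA j x + (4⁻¹ : ℂ) • hB j x + (2⁻¹ : ℂ) • hZ j x
  have mm : ∀ j x, D.Nm j (χ x) = χ (D.Nm j x) := by
    intro j x
    linear_combination (norm := module) (4⁻¹ : ℂ) • hA j x + (4⁻¹ : ℂ) • hB j x - (2⁻¹ : ℂ) • hZ j x
  have my : ∀ j x, D.Y j (χ x) = χ (D.Y j x) := by
    intro j x
    have : Complex.I • D.Y j (χ x) = Complex.I • χ (D.Y j x) := by
      linear_combination (norm := module) (2⁻¹ : ℂ) • hA j x - (2⁻¹ : ℂ) • hB j x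
    exact smul_right_injective H Complex.I_ne_zero this
  have mc : ∀ x, D.c (χ x) = χ (D.c x) := by
    have hPc : ∀ p x, P (D.k - p) (D.c x) = D.c (P p x) := by
      intro p x
      induction x using D.hom_induction with
      | h1 i x hx =>
        by_cases hpi : p = i
        · subst hpi; rw [hP2 p x hx, hP2 _ _ (D.conj_mem p x hx)]
        · rw [hP3 p i hpi x hx, hP3 (D.k - p) (D.k - i) (by omega) _ (D.conj_mem i x hx), map_zero]
      | h0 => simp
      | ha x y hx hy => simp only [map_add, hx, hy]
    intro x
    induction x using D.hom_induction with
    | h1 p x hx => rw [hχ p x hx, hχ (D.k - p) _ (D.conj_mem p x hx), ← lc, hPc]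
    | h0 => simp
    | ha x y hx hy => simp only [map_add, hx, hy]
  have mP : ∀ p x, P p (χ x) = χ (P p x) := by
    intro p x
    induction x using D.hom_induction with
    | h1 i x hx =>
      rw [hχ i x hx]
      by_cases hpi : p = i
      · subst hpi; rw [hP2 p x hx, hχ p x hx, hP2 p _ (hP1 p _)]
      · rw [hP3 p i hpi x hx, hP3 p i hpi _ (hP1 i _), map_zero]
    | h0 => simp
    | ha x y hx hy => simp only [map_add, hx, hy]
  refine ⟨LinearMap.ker χ, ⟨?_, ?_, ?_, ?_, ?_⟩, ?_⟩
  · intro x hx; rw [LinearMap.mem_ker] at hx ⊢; rw [← mc, hx, map_zero]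
  · intro j x hx; rw [LinearMap.mem_ker] at hx ⊢; rw [← mp, hx, map_zero]
  · intro j x hx; rw [LinearMap.mem_ker] at hx ⊢; rw [← mm, hx, map_zero]
  · intro j x hx; rw [LinearMap.mem_ker] at hx ⊢; rw [← my, hx, map_zero]
  · refine D.graded_of_proj hP1 hP2 hP3 fun p x hx => ?_
    rw [LinearMap.mem_ker] at hx ⊢
    rw [← mP, hx, map_zero]
  · refine ⟨?_, ?_⟩
    · rw [Submodule.disjoint_def]
      intro x hx hx'
      rw [← hχP.2 x hx]; exact hx'
    · rw [codisjoint_iff, eq_top_iff]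
      intro x _
      refine Submodule.mem_sup.2 ⟨χ x, hχP.1 x, x - χ x, ?_, by abel⟩
      rw [LinearMap.mem_ker, map_sub, hχP.2 _ (hχP.1 x), sub_self]

/-- Intersections of invariant subspaces are invariant. -/
lemma HorizontalSL2Data.IsInvariant.inf {D : HorizontalSL2Data H}
    {U W : Submodule ℂ H} (hU : D.IsInvariant U) (hW : D.IsInvariant W) :
    D.IsInvariant (U ⊓ W) := by
  obtain ⟨P, hP1, hP2, hP3, hglue⟩ := D.exists_projectors
  obtain ⟨hc, hp, hm, hy, hg⟩ := hU
  obtain ⟨hc', hp', hm', hy', hg'⟩ := hW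
  refine ⟨fun x hx => ⟨hc x hx.1, hc' x hx.2⟩, fun j x hx => ⟨hp j x hx.1, hp' j x hx.2⟩,
    fun j x hx => ⟨hm j x hx.1, hm' j x hx.2⟩, fun j x hx => ⟨hy j x hx.1, hy' j x hx.2⟩, ?_⟩
  exact D.graded_of_proj hP1 hP2 hP3 fun p x hx =>
    ⟨D.proj_mem hP2 hP3 hg p x hx.1, D.proj_mem hP2 hP3 hg' p x hx.2⟩

lemma HorizontalSL2Data.exists_finset [FiniteDimensional ℂ H] (D : HorizontalSL2Data H) :
    ∀ (n : ℕ) (U : Submodule ℂ H), Module.finrank ℂ U = n → D.IsInvariant U →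
      ∃ s : Finset (Submodule ℂ H), (∀ V ∈ s, D.IsIrreducible V) ∧ s.SupIndep id ∧ s.sup id = U := by
  classical
  intro n
  induction n using Nat.strong_induction_on with
  | _ n ih =>
    intro U hn hU
    by_cases h0 : U = ⊥
    · exact ⟨∅, by simp, by simp, by simp [h0]⟩
    by_cases hirr : D.IsIrreducible U
    · exact ⟨{U}, by simpa using hirr, by simp, by simp⟩
    · obtain ⟨V, hV, hVU, hV0, hV1⟩ : ∃ V, D.IsInvariant V ∧ V ≤ U ∧ V ≠ ⊥ ∧ V ≠ U := by
        by_contra! hcon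
        refine hirr ⟨h0, hU, fun V hV hVU => ?_⟩
        by_cases hb : V = ⊥
        · exact Or.inl hb
        · exact Or.inr (hcon V hV hVU hb)
      obtain ⟨W, hW, hc⟩ := D.exists_invariant_compl hV
      have hWU : D.IsInvariant (W ⊓ U) := hW.inf hU
      have hsup : V ⊔ W ⊓ U = U := by
        rw [← sup_inf_assoc_of_le _ hVU, hc.sup_eq_top, top_inf_eq]
      have hdis : Disjoint V (W ⊓ U) := hc.disjoint.mono_right inf_le_left
      have hlt1 : V < U := lt_of_le_of_ne hVU hV1
      have hlt2 : W ⊓ U < U := by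
        refine lt_of_le_of_ne inf_le_right fun he => hV0 ?_
        rw [he] at hdis
        exact hdis.eq_bot_of_le hVU
      obtain ⟨s, hs1, hs2, hs3⟩ := ih _ (hn ▸ Submodule.finrank_lt_finrank_of_lt hlt1) V rfl hV
      obtain ⟨t, ht1, ht2, ht3⟩ :=
        ih _ (hn ▸ Submodule.finrank_lt_finrank_of_lt hlt2) (W ⊓ U) rfl hWU
      refine ⟨s ∪ t, ?_, ?_, ?_⟩
      · intro X hX
        rcases Finset.mem_union.1 hX with h | h
        exacts [hs1 X h, ht1 X h]
      · exact hs2.union ht2 (by rw [hs3, ht3]; exact hdis)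
      · rw [Finset.sup_union, hs3, ht3, hsup]

end HodgeAux

/-- A finite-dimensional complex vector space with real structure, Hodge structure of
weight `k`, and horizontal `(𝔰𝔩₂)²`-action defined over `ℝ` decomposes as an internal
direct sum of finitely many invariant irreducible subspaces. -/
theorem exists_decomposition_into_invariant_irreducibles
    (H : Type*) [AddCommGroup H] [Module ℂ H] [FiniteDimensional ℂ H]
    (D : HorizontalSL2Data H) :
    ∃ (n : ℕ) (U : Fin n → Submodule ℂ H),
      (∀ i, D.IsIrreducible (U i)) ∧ DirectSum.IsInternal U := by
  have htop : D.IsInvariant ⊤ := by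
    refine ⟨fun _ _ => trivial, fun _ _ _ => trivial, fun _ _ _ => trivial, fun _ _ _ => trivial, ?_⟩
    simp only [top_inf_eq]
    exact D.internal.submodule_iSup_eq_top.symm
  obtain ⟨s, hs1, hs2, hs3⟩ := D.exists_finset _ ⊤ rfl htop
  refine ⟨s.card, fun i => (s.equivFin.symm i : Submodule ℂ H), fun i => hs1 _ (Subtype.property _), ?_⟩
  apply DirectSum.isInternal_submodule_of_iSupIndep_of_iSup_eq_top
  · have := iSupIndep_comp_coe_iff_supIndep.2 hs2
    exact this.comp s.equivFin.symm.injective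
  · rw [Equiv.iSup_comp (g := fun i : s => (i : Submodule ℂ H)) s.equivFin.symm, ← hs3, Finset.sup_eq_iSup, iSup_subtype]
    rfl
end

section
/- Let H be a finite-dimensional complex vector space with a real structure c, carrying a Hodge structure of weight k and a horizontal (sl₂)²-action defined over ℝ. Then every invariant subspace U ⊆ H admits an invariant complement: there exists an invariant subspace U' with H = U ⊕ U'. -/
namespace SLTwo

open Module

variable {V : Type*} [AddCommGroup V] [Module ℂ V]

/-- An `sl₂`-triple of endomorphisms, written pointwise. -/
structure Tri (e f h : End ℂ V) : Prop where
  he : ∀ x, h (e x) = e (h x) + (2 : ℂ) • e x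
  hf : ∀ x, h (f x) = f (h x) - (2 : ℂ) • f x
  ef : ∀ x, e (f x) = f (e x) + h x

theorem Tri.symm {e f h : End ℂ V} (t : Tri e f h) : Tri f e (-h) where
  he x := by simp only [LinearMap.neg_apply, t.hf, map_neg]; module
  hf x := by simp only [LinearMap.neg_apply, t.he, map_neg]; module
  ef x := by simp only [LinearMap.neg_apply, t.ef]; module

theorem nilp [FiniteDimensional ℂ V] {e h : End ℂ V} (a : ℂ) (ha : a ≠ 0)
    (he : ∀ x, h (e x) = e (h x) + a • e x) : ∃ n : ℕ, ∀ x, (e ^ n) x = 0 := by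
  by_contra hcon
  push Not at hcon
  have hne : ∀ n : ℕ, e ^ n ≠ 0 := by
    intro n h0
    obtain ⟨x, hx⟩ := hcon n
    simp [h0] at hx
  have hc : ∀ n : ℕ, ∀ x, h ((e ^ n) x) = (e ^ n) (h x) + ((n : ℂ) * a) • (e ^ n) x := by
    intro n
    induction n with
    | zero => intro x; simp
    | succ n ih =>
      intro x
      simp only [pow_succ', End.mul_apply, he, ih, map_add, map_smul]
      push_cast
      module
  let A : End ℂ (End ℂ V) := LinearMap.mulLeft ℂ h - LinearMap.mulRight ℂ h
  have hev : ∀ n : ℕ, A.HasEigenvalue ((n : ℂ) * a) := by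
    intro n
    apply End.hasEigenvalue_of_hasEigenvector (x := e ^ n)
    refine ⟨End.mem_eigenspace_iff.2 ?_, hne n⟩
    ext x
    simp only [A, LinearMap.sub_apply, LinearMap.mulLeft_apply, LinearMap.mulRight_apply,
      End.mul_apply, hc, LinearMap.smul_apply]
    module
  have hfin : Set.Finite A.HasEigenvalue := A.finite_hasEigenvalue
  have hinj : Function.Injective (fun n : ℕ => (n : ℂ) * a) := by
    intro m n hmn
    exact_mod_cast mul_right_cancel₀ ha hmn
  exact Set.infinite_of_injective_forall_mem hinj hev hfin

namespace Tri
variable {e f h : End ℂ V}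

theorem e_nilp [FiniteDimensional ℂ V] (t : Tri e f h) : ∃ n : ℕ, ∀ x, (e ^ n) x = 0 :=
  nilp 2 two_ne_zero t.he

theorem f_nilp [FiniteDimensional ℂ V] (t : Tri e f h) : ∃ n : ℕ, ∀ x, (f ^ n) x = 0 :=
  t.symm.e_nilp

theorem e_fpow (t : Tri e f h) (n : ℕ) : ∀ x, e ((f ^ (n + 1)) x) =
    (f ^ (n + 1)) (e x) + ((n : ℂ) + 1) • (f ^ n) (h x - (n : ℂ) • x) := by
  induction n with
  | zero => intro x; simp [t.ef]
  | succ n ih =>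
    intro x
    rw [pow_succ, End.mul_apply, ih (f x), t.ef, t.hf]
    have h1 : ∀ z, (f ^ (n + 1)) z = (f ^ n) (f z) := fun z => by rw [pow_succ, End.mul_apply]
    simp only [End.mul_apply, h1, map_add, map_sub, map_smul]
    push_cast
    module

/-- on `ker e`, descending. -/
theorem desc (t : Tri e f h) {n : ℕ} {x : V} (hx : e x = 0) (hn : (f ^ (n + 1)) x = 0) :
    (f ^ n) (h x - (n : ℂ) • x) = 0 := by
  have := t.e_fpow n x
  rw [hn, hx, map_zero, map_zero, zero_add] at this
  have h2 : ((n : ℂ) + 1) ≠ 0 := by exact_mod_cast Nat.succ_ne_zero n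
  exact (smul_eq_zero.1 this.symm).resolve_left h2

theorem inj [FiniteDimensional ℂ V] (t : Tri e f h) (m : ℕ) {x : V} (hx : e x = 0)
    (hm : h x + ((m : ℂ) + 2) • x = 0) : x = 0 := by
  obtain ⟨n, hn⟩ := t.f_nilp
  have key : ∀ n : ℕ, (f ^ n) x = 0 → x = 0 := by
    intro n
    induction n with
    | zero => intro h0; simpa using h0
    | succ n ih =>
      intro h0
      apply ih
      have := t.desc hx h0
      rw [eq_neg_of_add_eq_zero_left hm, map_sub, map_neg, map_smul, map_smul] at this
      have h3 : ((n + m + 2 : ℕ) : ℂ) • (f ^ n) x = 0 := by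
        rw [← neg_eq_zero, ← this]; push_cast; module
      refine (smul_eq_zero.1 h3).resolve_left ?_
      exact_mod_cast (by omega : n + m + 2 ≠ 0)
  exact key n (hn x)

theorem disj [FiniteDimensional ℂ V] (t : Tri e f h) {y : V} (hy : e (f y) = 0) : f y = 0 := by
  obtain ⟨n, hn⟩ := t.e_nilp
  have key : ∀ n : ℕ, ∀ y, e (f y) = 0 → (e ^ n) y = 0 → f y = 0 := by
    intro n
    induction n with
    | zero => intro y _ h0; have : y = 0 := by simpa using h0
              simp [this]
    | succ n ih =>
      intro y hy h0
      have h1 := t.symm.e_fpow n y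
      have h2 : (e ^ (n + 1)) (f y) = 0 := by rw [pow_succ, End.mul_apply, hy, map_zero]
      have h3 : ((n : ℂ) + 1) ≠ 0 := by exact_mod_cast Nat.succ_ne_zero n
      rw [h0, h2, map_zero, zero_add] at h1
      have h4 := (smul_eq_zero.1 h1.symm).resolve_left h3
      have h5 : (e ^ n) (h y + (n : ℂ) • y) = 0 := by
        rw [← neg_eq_zero, ← h4, ← map_neg]; congr 1
        simp only [LinearMap.neg_apply]; module
      have hfy : f (h y + (n : ℂ) • y) = h (f y) + ((n : ℂ) + 2) • f y := by
        simp only [map_add, map_smul, t.hf]; module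
      have h6 := ih (h y + (n : ℂ) • y) (by
        have : h (e (f y)) = 0 := by rw [hy, map_zero]
        rw [t.he, hy, smul_zero, add_zero] at this
        rw [hfy, map_add, map_smul, hy, this]; simp) h5
      rw [hfy] at h6
      exact t.inj n hy h6
  exact key n y hy (hn y)

open LinearMap in
theorem sup_top [FiniteDimensional ℂ V] (t : Tri e f h) : ker e ⊔ range f = ⊤ := by
  have d1 : ker e ⊓ range f = ⊥ := by
    rw [eq_bot_iff]; rintro x ⟨hx, y, rfl⟩; exact t.disj hx
  have d2 : ker f ⊓ range e = ⊥ := by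
    rw [eq_bot_iff]; rintro x ⟨hx, y, rfl⟩; exact t.symm.disj hx
  have a1 := Submodule.finrank_sup_add_finrank_inf_eq (ker e) (range f)
  have a2 := Submodule.finrank_sup_add_finrank_inf_eq (ker f) (range e)
  rw [d1, finrank_bot] at a1
  rw [d2, finrank_bot] at a2
  have b1 := finrank_range_add_finrank_ker e
  have b2 := finrank_range_add_finrank_ker f
  have c2 := Submodule.finrank_le (ker f ⊔ range e)
  apply Submodule.eq_top_of_finrank_eq
  have c1 := Submodule.finrank_le (ker e ⊔ range f)
  omega

/-- Version for a stable subspace. -/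
theorem sub_le [FiniteDimensional ℂ V] (t : Tri e f h) (U : Submodule ℂ V)
    (ue : ∀ x ∈ U, e x ∈ U) (uf : ∀ x ∈ U, f x ∈ U) (uh : ∀ x ∈ U, h x ∈ U) :
    U ≤ (U ⊓ LinearMap.ker e) ⊔ U.map f := by
  have t' : Tri (e.restrict ue) (f.restrict uf) (h.restrict uh) := by
    constructor <;> intro x <;> ext
    · simpa using t.he x
    · simpa using t.hf x
    · simpa using t.ef x
  intro x hx
  have hx' : (⟨x, hx⟩ : U) ∈ LinearMap.ker (e.restrict ue) ⊔ LinearMap.range (f.restrict uf) := by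
    rw [t'.sup_top]; trivial
  obtain ⟨y, hy, z, ⟨w, rfl⟩, hyz⟩ := Submodule.mem_sup.1 hx'
  refine Submodule.mem_sup.2 ⟨y, ⟨y.2, ?_⟩, f w, ⟨w, w.2, rfl⟩, ?_⟩
  · simpa using congrArg Subtype.val (LinearMap.mem_ker.1 hy)
  · simpa using congrArg Subtype.val hyz

/-- diagonalizability of `h` on `ker e`. -/
theorem diag [FiniteDimensional ℂ V] (t : Tri e f h) (U : Submodule ℂ V)
    (ue : ∀ x ∈ U, e x = 0) (uh : ∀ x ∈ U, h x ∈ U) :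
    U ≤ ⨆ i : ℕ, U ⊓ End.eigenspace h (i : ℂ) := by
  obtain ⟨n, hn⟩ := t.f_nilp
  have key : ∀ n : ℕ, ∀ x ∈ U, (f ^ n) x = 0 →
      x ∈ ⨆ i : Fin n, U ⊓ End.eigenspace h ((i : ℕ) : ℂ) := by
    intro n
    induction n with
    | zero => intro x _ h0; have : x = 0 := by simpa using h0
              simp [this]
    | succ n ih =>
      intro x hx h0
      have h1 := ih (h x - (n : ℂ) • x) (U.sub_mem (uh x hx) (U.smul_mem _ hx))
        (t.desc (ue x hx) h0)
      set S := ⨆ i : Fin n, U ⊓ End.eigenspace h ((i : ℕ) : ℂ) with hS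
      have hSU : S ≤ U := iSup_le fun i => inf_le_left
      have hle : S ≤ S.map (h - (n : ℂ) • 1) := by
        apply iSup_le
        rintro i y ⟨hyU, hy⟩
        have hne : ((i : ℕ) : ℂ) - n ≠ 0 := by
          rw [sub_ne_zero]; exact_mod_cast i.2.ne
        refine ⟨(((i : ℕ) : ℂ) - n)⁻¹ • y, S.smul_mem _ ?_, ?_⟩
        · exact Submodule.mem_iSup_of_mem i ⟨hyU, hy⟩
        · simp only [map_smul, LinearMap.sub_apply, End.mem_eigenspace_iff.1 hy,
            LinearMap.smul_apply, End.one_apply, ← sub_smul, smul_smul]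
          rw [inv_mul_cancel₀ hne, one_smul]
      obtain ⟨u, hu, huz⟩ := hle h1
      have hS' : S ≤ ⨆ i : Fin (n + 1), U ⊓ End.eigenspace h ((i : ℕ) : ℂ) :=
        iSup_le fun i => le_iSup_of_le i.castSucc (by simp)
      have hxu : x - u ∈ ⨆ i : Fin (n + 1), U ⊓ End.eigenspace h ((i : ℕ) : ℂ) := by
        apply Submodule.mem_iSup_of_mem (Fin.last n)
        refine ⟨U.sub_mem hx (hSU hu), End.mem_eigenspace_iff.2 ?_⟩
        simp only [LinearMap.sub_apply, LinearMap.smul_apply, End.one_apply] at huz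
        simp only [map_sub, Fin.val_last, smul_sub]
        rw [sub_eq_iff_eq_add] at huz
        rw [huz]; abel
      have := Submodule.add_mem _ hxu (hS' hu)
      simpa using this
  intro x hx
  have := key n x hx (hn x)
  exact (iSup_le fun i : Fin n => le_iSup (fun i : ℕ => U ⊓ End.eigenspace h (i : ℂ)) i) this

end Tri

theorem gen_le {f : End ℂ V} (hf : ∃ n : ℕ, ∀ x, (f ^ n) x = 0) (U T : Submodule ℂ V)
    (hU : U ≤ T ⊔ U.map f) (hT : ∀ x ∈ T, f x ∈ T) : U ≤ T := by
  have key : ∀ n : ℕ, U ≤ T ⊔ U.map (f ^ n) := by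
    intro n
    induction n with
    | zero => exact le_sup_of_le_right (by intro x hx; exact ⟨x, hx, by simp⟩)
    | succ n ih =>
      refine hU.trans (sup_le le_sup_left ?_)
      rintro _ ⟨x, hx, rfl⟩
      obtain ⟨a, ha, _, ⟨b, hb, rfl⟩, rfl⟩ := Submodule.mem_sup.1 (ih hx)
      rw [map_add]
      refine Submodule.add_mem_sup (hT a ha) ⟨b, hb, ?_⟩
      rw [pow_succ', End.mul_apply]
  obtain ⟨n, hn⟩ := hf
  intro x hx
  obtain ⟨a, ha, _, ⟨b, hb, rfl⟩, rfl⟩ := Submodule.mem_sup.1 (key n hx)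
  rw [hn b, add_zero]; exact ha


/-- Two commuting triples together with a grading operator. -/
structure Sys (e f h : Fin 2 → End ℂ V) (D : End ℂ V) : Prop where
  tri : ∀ j, Tri (e j) (f j) (h j)
  ee : ∀ i j, i ≠ j → ∀ x, e i (e j x) = e j (e i x)
  ef : ∀ i j, i ≠ j → ∀ x, e i (f j x) = f j (e i x)
  eh : ∀ i j, i ≠ j → ∀ x, e i (h j x) = h j (e i x)
  ff : ∀ i j, i ≠ j → ∀ x, f i (f j x) = f j (f i x)
  fh : ∀ i j, i ≠ j → ∀ x, f i (h j x) = h j (f i x)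
  hh : ∀ i j, ∀ x, h i (h j x) = h j (h i x)
  De : ∀ j x, D (e j x) = e j (D x) + e j x
  Df : ∀ j x, D (f j x) = f j (D x) - f j x
  Dh : ∀ j x, D (h j x) = h j (D x)
  top : ⨆ μ, End.eigenspace D μ = ⊤

namespace Sys
variable {e f h : Fin 2 → End ℂ V} {D : End ℂ V}

theorem gen_all [FiniteDimensional ℂ V] (s : Sys e f h D) (U T : Submodule ℂ V)
    (ue : ∀ j, ∀ x ∈ U, e j x ∈ U) (uf : ∀ j, ∀ x ∈ U, f j x ∈ U) (uh : ∀ j, ∀ x ∈ U, h j x ∈ U)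
    (tf : ∀ j, ∀ x ∈ T, f j x ∈ T)
    (hT : ∀ x ∈ U, e 0 x = 0 → e 1 x = 0 → x ∈ T) : U ≤ T := by
  have h01 : (0 : Fin 2) ≠ 1 := by decide
  have h1 : U ⊓ LinearMap.ker (e 0) ≤ T := by
    apply gen_le (s.tri 1).f_nilp _ _ _ (tf 1)
    refine ((s.tri 1).sub_le (U ⊓ LinearMap.ker (e 0)) ?_ ?_ ?_).trans (sup_le_sup_right ?_ _)
    · rintro x ⟨hx, hx0⟩
      rw [SetLike.mem_coe, LinearMap.mem_ker] at hx0
      exact ⟨ue 1 x hx, by simp [s.ee 0 1 h01, hx0]⟩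
    · rintro x ⟨hx, hx0⟩
      rw [SetLike.mem_coe, LinearMap.mem_ker] at hx0
      exact ⟨uf 1 x hx, by simp [s.ef 0 1 h01, hx0]⟩
    · rintro x ⟨hx, hx0⟩
      rw [SetLike.mem_coe, LinearMap.mem_ker] at hx0
      exact ⟨uh 1 x hx, by simp [s.eh 0 1 h01, hx0]⟩
    · rintro x ⟨⟨hx, hx0⟩, hx1⟩
      exact hT x hx hx0 hx1
  apply gen_le (s.tri 0).f_nilp _ _ _ (tf 0)
  exact ((s.tri 0).sub_le U (ue 0) (uf 0) (uh 0)).trans (sup_le_sup_right h1 _)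

/-- The primitive space. -/
def prim (e : Fin 2 → End ℂ V) : Submodule ℂ V := ⨅ j, LinearMap.ker (e j)

theorem mem_prim {x : V} : x ∈ prim e ↔ ∀ j, e j x = 0 := by
  simp [prim]

theorem prim_h (s : Sys e f h D) (j : Fin 2) {x : V} (hx : x ∈ prim e) : h j x ∈ prim e := by
  rw [mem_prim] at *
  intro i
  by_cases hij : i = j
  · subst hij
    have := (s.tri i).he x
    simpa [hx i] using this.symm
  · rw [s.eh i j hij, hx i, map_zero]

theorem prim_D (s : Sys e f h D) {x : V} (hx : x ∈ prim e) : D x ∈ prim e := by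
  rw [mem_prim] at *
  intro i
  have := s.De i x
  simpa [hx i] using this.symm

/-- simultaneous eigenvectors span the primitive space -/
theorem prim_le [FiniteDimensional ℂ V] (s : Sys e f h D) (T : Submodule ℂ V)
    (hT : ∀ v ∈ prim e, (∃ μ : ℂ, D v = μ • v) → (∀ j, ∃ μ : ℂ, h j v = μ • v) → v ∈ T) :
    prim e ≤ T := by
  rw [Submodule.eq_iSup_inf_genEigenspace (f := D) (p := prim e) 1
    (fun x hx => s.prim_D hx) s.top]
  refine iSup_le fun μ => ?_
  refine ((s.tri 0).diag _ ?_ ?_).trans (iSup_le fun a => ?_)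
  · intro x hx; exact mem_prim.1 hx.1 0
  · rintro x ⟨hx, hx2⟩
    refine ⟨s.prim_h 0 hx, End.mem_eigenspace_iff.2 ?_⟩
    rw [s.Dh, End.mem_eigenspace_iff.1 hx2, map_smul]
  refine ((s.tri 1).diag _ ?_ ?_).trans (iSup_le fun b => ?_)
  · intro x hx; exact mem_prim.1 hx.1.1 1
  · rintro x ⟨⟨hx, hx2⟩, hx3⟩
    refine ⟨⟨s.prim_h 1 hx, End.mem_eigenspace_iff.2 ?_⟩, End.mem_eigenspace_iff.2 ?_⟩
    · rw [s.Dh, End.mem_eigenspace_iff.1 hx2, map_smul]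
    · rw [s.hh, End.mem_eigenspace_iff.1 hx3, map_smul]
  rintro x ⟨⟨⟨hx, hx2⟩, hx3⟩, hx4⟩
  refine hT x hx ⟨_, End.mem_eigenspace_iff.1 hx2⟩ fun j => ?_
  fin_cases j
  · exact ⟨_, End.mem_eigenspace_iff.1 hx3⟩
  · exact ⟨_, End.mem_eigenspace_iff.1 hx4⟩

/-- A stable complement inside the primitive space. -/
theorem prim_compl [FiniteDimensional ℂ V] (s : Sys e f h D) (U : Submodule ℂ V) :
    ∃ W : Submodule ℂ V, W ≤ prim e ∧ (∀ j, ∀ x ∈ W, h j x ∈ W) ∧ (∀ x ∈ W, D x ∈ W) ∧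
      U ⊓ W = ⊥ ∧ prim e ≤ U ⊔ W := by
  let S : Set (Submodule ℂ V) := {W | W ≤ prim e ∧ (∀ j, ∀ x ∈ W, h j x ∈ W) ∧
    (∀ x ∈ W, D x ∈ W) ∧ U ⊓ W = ⊥}
  have hS : S.Nonempty := ⟨⊥, by simp [S]⟩
  obtain ⟨W, ⟨hW1, hW2, hW3, hW4⟩, hmax⟩ :=
    (wellFounded_gt : WellFounded ((· > ·) : Submodule ℂ V → Submodule ℂ V → Prop)).has_min S hS
  refine ⟨W, hW1, hW2, hW3, hW4, s.prim_le _ ?_⟩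
  rintro v hv ⟨μ, hμ⟩ hh
  by_contra hvn
  have hvW : v ∉ W := fun hvW => hvn (Submodule.mem_sup_right hvW)
  refine hmax (W ⊔ ℂ ∙ v) ⟨?_, ?_, ?_, ?_⟩ ?_
  · exact sup_le hW1 ((Submodule.span_singleton_le_iff_mem _ _).2 hv)
  · intro j x hx
    obtain ⟨w, hw, a, rfl⟩ : ∃ w ∈ W, ∃ a : ℂ, w + a • v = x := by
      simpa [Submodule.mem_sup, Submodule.mem_span_singleton] using hx
    obtain ⟨ν, hν⟩ := hh j
    rw [map_add, map_smul, hν, smul_smul]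
    exact Submodule.add_mem_sup (hW2 j w hw) (Submodule.smul_mem _ _ (Submodule.mem_span_singleton_self v))
  · intro x hx
    obtain ⟨w, hw, a, rfl⟩ : ∃ w ∈ W, ∃ a : ℂ, w + a • v = x := by
      simpa [Submodule.mem_sup, Submodule.mem_span_singleton] using hx
    rw [map_add, map_smul, hμ, smul_smul]
    exact Submodule.add_mem_sup (hW3 w hw) (Submodule.smul_mem _ _ (Submodule.mem_span_singleton_self v))
  · rw [eq_bot_iff]
    rintro x ⟨hxU, hx⟩
    obtain ⟨w, hw, a, rfl⟩ : ∃ w ∈ W, ∃ a : ℂ, w + a • v = x := by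
      simpa [Submodule.mem_sup, Submodule.mem_span_singleton] using hx
    by_cases ha : a = 0
    · subst ha
      rw [← hW4]
      simp only [zero_smul, add_zero] at hxU ⊢
      exact ⟨hxU, hw⟩
    · exfalso
      apply hvn
      have h1 : a • v ∈ U ⊔ W := by
        have := Submodule.sub_mem (U ⊔ W) (Submodule.mem_sup_left hxU) (Submodule.mem_sup_right hw)
        simpa using this
      exact (Submodule.smul_mem_iff _ ha).1 h1
  · refine lt_of_le_of_ne le_sup_left fun heq => hvW ?_
    rw [heq]
    exact Submodule.mem_sup_right (Submodule.mem_span_singleton_self v)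

theorem compl [FiniteDimensional ℂ V] (s : Sys e f h D) (U : Submodule ℂ V)
    (ue : ∀ j, ∀ x ∈ U, e j x ∈ U) (uf : ∀ j, ∀ x ∈ U, f j x ∈ U)
    (uh : ∀ j, ∀ x ∈ U, h j x ∈ U) :
    ∃ U' : Submodule ℂ V, (∀ j, ∀ x ∈ U', e j x ∈ U') ∧ (∀ j, ∀ x ∈ U', f j x ∈ U') ∧
      (∀ j, ∀ x ∈ U', h j x ∈ U') ∧ (∀ x ∈ U', D x ∈ U') ∧ IsCompl U U' := by
  obtain ⟨W, hW1, hWh, hWD, hUW, hP⟩ := s.prim_compl U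
  let G : Set (Submodule ℂ V) := {T | W ≤ T ∧ ∀ j, ∀ x ∈ T, f j x ∈ T}
  let M : Submodule ℂ V := sInf G
  have hWM : W ≤ M := le_sInf fun T hT => hT.1
  have hMmin : ∀ T ∈ G, M ≤ T := fun T hT => sInf_le hT
  have hMf : ∀ j, ∀ x ∈ M, f j x ∈ M := by
    intro j x hx
    rw [Submodule.mem_sInf] at hx ⊢
    exact fun T hT => hT.2 j x (hx T hT)
  let T : Submodule ℂ V := M ⊓ ((⨅ j, M.comap (e j)) ⊓ (⨅ j, M.comap (h j)) ⊓ M.comap D)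
  have memT : ∀ x, x ∈ T ↔ x ∈ M ∧ (∀ j, e j x ∈ M) ∧ (∀ j, h j x ∈ M) ∧ D x ∈ M := by
    intro x; simp [T, and_assoc]
  have hTG : T ∈ G := by
    constructor
    · intro x hx
      rw [memT]
      refine ⟨hWM hx, fun j => ?_, fun j => hWM (hWh j x hx), hWM (hWD x hx)⟩
      rw [mem_prim.1 (hW1 hx) j]; exact M.zero_mem
    · intro j x hx
      rw [memT] at hx ⊢
      obtain ⟨h1, h2, h3, h4⟩ := hx
      refine ⟨hMf j x h1, fun i => ?_, fun i => ?_, ?_⟩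
      · by_cases hij : i = j
        · subst hij
          rw [(s.tri i).ef]
          exact M.add_mem (hMf i _ (h2 i)) (h3 i)
        · rw [s.ef i j hij]
          exact hMf j _ (h2 i)
      · by_cases hij : i = j
        · subst hij
          rw [(s.tri i).hf]
          exact M.sub_mem (hMf i _ (h3 i)) (M.smul_mem _ (hMf i _ h1))
        · rw [← s.fh j i (Ne.symm hij)]
          exact hMf j _ (h3 i)
      · rw [s.Df]
        exact M.sub_mem (hMf j _ h4) (hMf j _ h1)
  have hMT := hMmin T hTG
  have hMe : ∀ j, ∀ x ∈ M, e j x ∈ M := fun j x hx => ((memT x).1 (hMT hx)).2.1 j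
  have hMh : ∀ j, ∀ x ∈ M, h j x ∈ M := fun j x hx => ((memT x).1 (hMT hx)).2.2.1 j
  have hMD : ∀ x ∈ M, D x ∈ M := fun x hx => ((memT x).1 (hMT hx)).2.2.2
  have h01 : (0 : Fin 2) ≠ 1 := by decide
  -- the primitive vectors of `M` lie in `W`
  have hMP : ∀ x ∈ M, e 0 x = 0 → e 1 x = 0 → x ∈ W := by
    intro x hx hx0 hx1
    have hG : W ⊔ LinearMap.range (f 0) ⊔ LinearMap.range (f 1) ∈ G := by
      refine ⟨le_sup_of_le_left le_sup_left, fun j y hy => ?_⟩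
      fin_cases j
      · exact Submodule.mem_sup_left (Submodule.mem_sup_right ⟨y, rfl⟩)
      · exact Submodule.mem_sup_right ⟨y, rfl⟩
    obtain ⟨y, hy, _, ⟨b, rfl⟩, hyb⟩ := Submodule.mem_sup.1 (hMmin _ hG hx)
    obtain ⟨w, hw, _, ⟨a, rfl⟩, rfl⟩ := Submodule.mem_sup.1 hy
    have hwp := mem_prim.1 (hW1 hw)
    have hb : b ∈ LinearMap.ker (e 0) ⊔ LinearMap.range (f 0) := by
      rw [(s.tri 0).sup_top]; trivial
    obtain ⟨b0, hb0, _, ⟨b1, rfl⟩, rfl⟩ := Submodule.mem_sup.1 hb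
    rw [LinearMap.mem_ker] at hb0
    have hx' : x = w + (f 0 (a + f 1 b1) + f 1 b0) := by
      rw [← hyb, map_add, map_add, s.ff 1 0 h01.symm]; abel
    have k0 : e 0 (f 0 (a + f 1 b1)) = 0 := by
      have := hx0
      rw [hx', map_add, map_add, hwp 0, s.ef 0 1 h01 b0, hb0, map_zero] at this
      simpa using this
    have k0' := (s.tri 0).disj k0
    rw [k0', zero_add] at hx'
    have k1 : e 1 (f 1 b0) = 0 := by
      have := hx1
      rw [hx', map_add, hwp 1] at this
      simpa using this
    rw [(s.tri 1).disj k1, add_zero] at hx'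
    rw [hx']; exact hw
  refine ⟨M, hMe, hMf, hMh, hMD, ?_, ?_⟩
  · rw [disjoint_iff_inf_le]
    apply s.gen_all (U ⊓ M) ⊥
    · exact fun j x hx => ⟨ue j x hx.1, hMe j x hx.2⟩
    · exact fun j x hx => ⟨uf j x hx.1, hMf j x hx.2⟩
    · exact fun j x hx => ⟨uh j x hx.1, hMh j x hx.2⟩
    · intro j x hx
      rw [Submodule.mem_bot] at hx ⊢
      rw [hx, map_zero]
    · intro x hx h0 h1
      rw [← hUW]
      exact ⟨hx.1, hMP x hx.2 h0 h1⟩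
  · rw [codisjoint_iff_le_sup]
    apply s.gen_all ⊤ (U ⊔ M)
    · intros; trivial
    · intros; trivial
    · intros; trivial
    · intro j x hx
      obtain ⟨y, hy, z, hz, rfl⟩ := Submodule.mem_sup.1 hx
      rw [map_add]
      exact Submodule.add_mem_sup (uf j y hy) (hMf j z hz)
    · intro x _ h0 h1
      apply sup_le_sup_left hWM U
      apply hP
      rw [mem_prim]
      intro j
      fin_cases j
      · exact h0
      · exact h1

end Sys

/-- The grading operator attached to a decomposition indexed by `ℤ`. -/
theorem exists_grading (P : ℤ → Submodule ℂ V) (hP : DirectSum.IsInternal P) :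
    ∃ D : End ℂ V, ∀ p, P p = End.eigenspace D (p : ℂ) := by
  classical
  let L := LinearEquiv.ofBijective (DirectSum.coeLinearMap P) hP
  have hL : ∀ p (x : P p), L (DirectSum.lof ℂ ℤ (fun p => P p) p x) = x := by
    intro p x
    exact DirectSum.coeLinearMap_lof P p x
  let D : End ℂ V := (DirectSum.toModule ℂ ℤ V fun p => (p : ℂ) • (P p).subtype) ∘ₗ
    L.symm.toLinearMap
  have hD : ∀ p, ∀ x ∈ P p, D x = (p : ℂ) • x := by
    intro p x hx
    have : L.symm x = DirectSum.lof ℂ ℤ (fun p => P p) p ⟨x, hx⟩ := by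
      rw [LinearEquiv.symm_apply_eq, hL]
    simp [D, this]
  refine ⟨D, fun p => le_antisymm (fun x hx => End.mem_eigenspace_iff.2 (hD p x hx)) ?_⟩
  intro x hx
  have htop : x ∈ P p ⊔ ⨆ q ≠ p, P q := by
    have h1 := hP.submodule_iSup_eq_top
    have h2 : ⨆ q, P q ≤ P p ⊔ ⨆ q ≠ p, P q := by
      refine iSup_le fun q => ?_
      by_cases hq : q = p
      · subst hq; exact le_sup_left
      · exact le_sup_of_le_right (le_iSup₂_of_le q hq le_rfl)
    rw [h1] at h2
    exact h2 trivial
  obtain ⟨y, hy, z, hz, rfl⟩ := Submodule.mem_sup.1 htop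
  have hz1 : z ∈ End.eigenspace D (p : ℂ) := by
    have := Submodule.sub_mem _ hx (End.mem_eigenspace_iff.2 (hD p y hy))
    simpa using this
  have hz2 : z ∈ ⨆ μ ≠ (p : ℂ), End.eigenspace D μ := by
    refine (iSup₂_le fun q hq => ?_ : ⨆ q ≠ p, P q ≤ _) hz
    refine le_iSup₂_of_le (q : ℂ) (by exact_mod_cast hq) ?_
    exact fun x hx => End.mem_eigenspace_iff.2 (hD q x hx)
  have := (End.eigenspaces_iSupIndep D (p : ℂ)).le_bot ⟨hz1, hz2⟩
  rw [Submodule.mem_bot] at this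
  rw [this, add_zero]; exact hy


theorem graded_of_stable [FiniteDimensional ℂ V] (P : ℤ → Submodule ℂ V)
    (hP : DirectSum.IsInternal P) (D : End ℂ V) (hD : ∀ p, P p = End.eigenspace D (p : ℂ))
    (K : Submodule ℂ V) (hK : ∀ x ∈ K, D x ∈ K) : K = ⨆ p, K ⊓ P p := by
  have htop : ⨆ p : ℤ, End.eigenspace D (p : ℂ) = ⊤ := by
    rw [← hP.submodule_iSup_eq_top]; exact iSup_congr fun p => (hD p).symm
  have htop' : ⨆ μ : ℂ, End.eigenspace D μ = ⊤ := by
    rw [eq_top_iff, ← htop]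
    exact iSup_le fun p => le_iSup (fun μ : ℂ => End.eigenspace D μ) (p : ℂ)
  refine le_antisymm ?_ (iSup_le fun p => inf_le_left)
  refine (Submodule.eq_iSup_inf_genEigenspace (f := D) (p := K) 1 hK htop').le.trans ?_
  refine iSup_le fun μ => ?_
  by_cases hμ : ∃ p : ℤ, (p : ℂ) = μ
  · obtain ⟨p, rfl⟩ := hμ
    refine le_iSup_of_le p ?_
    rw [hD p]
  · have h1 : ⨆ ν ≠ μ, End.eigenspace D ν = ⊤ := by
      rw [eq_top_iff, ← htop]
      exact iSup_le fun p => le_iSup₂_of_le (p : ℂ) (fun h => hμ ⟨p, h⟩) le_rfl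
    have h2 := End.eigenspaces_iSupIndep D μ
    rw [h1, disjoint_top] at h2
    refine inf_le_right.trans ?_
    change End.eigenspace D μ ≤ _
    rw [h2]; exact bot_le

theorem proj_comm {U U' : Submodule ℂ V} (hc : IsCompl U U') (A : End ℂ V)
    (h1 : ∀ x ∈ U, A x ∈ U) (h2 : ∀ x ∈ U', A x ∈ U') (x : V) :
    U.projection U' hc (A x) = A (U.projection U' hc x) := by
  have hx : x ∈ U ⊔ U' := by rw [hc.sup_eq_top]; trivial
  obtain ⟨y, hy, z, hz, rfl⟩ := Submodule.mem_sup.1 hx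
  rw [map_add, map_add, map_add, map_add,
    Submodule.projection_apply_of_mem_left hc hy,
    Submodule.projection_apply_of_mem_left hc (h1 y hy),
    (Submodule.projection_apply_eq_zero_iff hc).2 hz,
    (Submodule.projection_apply_eq_zero_iff hc).2 (h2 z hz), map_zero]

theorem ext_graded (P : ℤ → Submodule ℂ V) (hP : DirectSum.IsInternal P) {Q : V → Prop}
    (h0 : Q 0) (hadd : ∀ x y, Q x → Q y → Q (x + y)) (hmem : ∀ p, ∀ x ∈ P p, Q x) (x : V) :
    Q x := by
  have hx : x ∈ ⨆ p, P p := by rw [hP.submodule_iSup_eq_top]; trivial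
  exact Submodule.iSup_induction P (motive := Q) hx hmem h0 hadd

/-- The raising operator. -/
noncomputable def eop (a b y : End ℂ V) : End ℂ V := (1 / 2 : ℂ) • (a + b - Complex.I • y)

/-- The lowering operator. -/
noncomputable def fop (a b y : End ℂ V) : End ℂ V := (1 / 2 : ℂ) • (a + b + Complex.I • y)

/-- The semisimple operator. -/
noncomputable def hop (a b : End ℂ V) : End ℂ V := (-Complex.I) • (a - b)

theorem eop_apply (a b y : End ℂ V) (x : V) :
    eop a b y x = (1 / 2 : ℂ) • (a x + b x - Complex.I • y x) := rfl

theorem fop_apply (a b y : End ℂ V) (x : V) :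
    fop a b y x = (1 / 2 : ℂ) • (a x + b x + Complex.I • y x) := rfl

theorem hop_apply (a b : End ℂ V) (x : V) :
    hop a b x = (-Complex.I) • (a x - b x) := rfl

theorem tri_cayley {a b y : End ℂ V}
    (h1 : ∀ x, y (a x) = a (y x) + (2 : ℂ) • a x)
    (h2 : ∀ x, y (b x) = b (y x) - (2 : ℂ) • b x)
    (h3 : ∀ x, a (b x) = b (a x) + y x) : Tri (eop a b y) (fop a b y) (hop a b) := by
  have hI : Complex.I ^ 2 = -1 := Complex.I_sq
  constructor <;> intro x <;>
    simp only [eop_apply, fop_apply, hop_apply, map_add, map_sub, map_smul, h1, h2, h3] <;>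
    match_scalars <;> grind

end SLTwo

/-- Every invariant subspace of a finite-dimensional complex vector space with real
structure, Hodge structure of weight `k`, and horizontal `(𝔰𝔩₂)²`-action defined over
`ℝ` admits an invariant complement. -/
theorem exists_invariant_complement
    (H : Type*) [AddCommGroup H] [Module ℂ H] [FiniteDimensional ℂ H]
    (D : HorizontalSL2Data H)
    (U : Submodule ℂ H) (hU : D.IsInvariant U) :
    ∃ U' : Submodule ℂ H, D.IsInvariant U' ∧ IsCompl U U' := by
  classical
  obtain ⟨uc, up, um, uy, ug⟩ := hU
  obtain ⟨G, hG⟩ := SLTwo.exists_grading D.Hpq D.internal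
  have hGm : ∀ p, ∀ x ∈ D.Hpq p, G x = (p : ℂ) • x := by
    intro p x hx
    rw [hG p] at hx
    exact Module.End.mem_eigenspace_iff.1 hx
  have q1 : ∀ j x, D.Y j (D.Np j x) = D.Np j (D.Y j x) + (2 : ℂ) • D.Np j x := by
    intro j x
    have := LinearMap.congr_fun (D.sl2_YNp j) x
    simp only [LinearMap.sub_apply, Module.End.mul_apply, LinearMap.smul_apply] at this
    rw [← this]; abel
  have q2 : ∀ j x, D.Y j (D.Nm j x) = D.Nm j (D.Y j x) - (2 : ℂ) • D.Nm j x := by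
    intro j x
    have := LinearMap.congr_fun (D.sl2_YNm j) x
    simp only [LinearMap.sub_apply, Module.End.mul_apply, LinearMap.smul_apply] at this
    rw [sub_eq_iff_eq_add] at this
    rw [this]; module
  have q3 : ∀ j x, D.Np j (D.Nm j x) = D.Nm j (D.Np j x) + D.Y j x := by
    intro j x
    have := LinearMap.congr_fun (D.sl2_NpNm j) x
    simp only [LinearMap.sub_apply, Module.End.mul_apply] at this
    rw [← this]; abel
  let e : Fin 2 → Module.End ℂ H := fun j => SLTwo.eop (D.Np j) (D.Nm j) (D.Y j)
  let f : Fin 2 → Module.End ℂ H := fun j => SLTwo.fop (D.Np j) (D.Nm j) (D.Y j)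
  let h : Fin 2 → Module.End ℂ H := fun j => SLTwo.hop (D.Np j) (D.Nm j)
  have he : ∀ j x, e j x = (1 / 2 : ℂ) • (D.Np j x + D.Nm j x - Complex.I • D.Y j x) :=
    fun j x => rfl
  have hf : ∀ j x, f j x = (1 / 2 : ℂ) • (D.Np j x + D.Nm j x + Complex.I • D.Y j x) :=
    fun j x => rfl
  have hh : ∀ j x, h j x = (-Complex.I) • (D.Np j x - D.Nm j x) := fun j x => rfl
  have hemem : ∀ j p, ∀ x ∈ D.Hpq p, e j x ∈ D.Hpq (p + 1) := fun j p x hx =>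
    Submodule.smul_mem _ _ (D.horizontal_raise j p x hx)
  have hfmem : ∀ j p, ∀ x ∈ D.Hpq p, f j x ∈ D.Hpq (p - 1) := fun j p x hx =>
    Submodule.smul_mem _ _ (D.horizontal_lower j p x hx)
  have hhmem : ∀ j p, ∀ x ∈ D.Hpq p, h j x ∈ D.Hpq p := fun j p x hx =>
    Submodule.smul_mem _ _ (D.horizontal_zero j p x hx)
  have hcomm : ∀ i j, i ≠ j → ∀ x,
      D.Np i (D.Np j x) = D.Np j (D.Np i x) ∧ D.Np i (D.Nm j x) = D.Nm j (D.Np i x) ∧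
      D.Np i (D.Y j x) = D.Y j (D.Np i x) ∧ D.Nm i (D.Np j x) = D.Np j (D.Nm i x) ∧
      D.Nm i (D.Nm j x) = D.Nm j (D.Nm i x) ∧ D.Nm i (D.Y j x) = D.Y j (D.Nm i x) ∧
      D.Y i (D.Np j x) = D.Np j (D.Y i x) ∧ D.Y i (D.Nm j x) = D.Nm j (D.Y i x) ∧
      D.Y i (D.Y j x) = D.Y j (D.Y i x) := by
    intro i j hij x
    obtain ⟨a1, a2, a3, a4, a5, a6, a7, a8, a9⟩ := D.factors_commute i j hij
    exact ⟨LinearMap.congr_fun a1 x, LinearMap.congr_fun a2 x, LinearMap.congr_fun a3 x,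
      LinearMap.congr_fun a4 x, LinearMap.congr_fun a5 x, LinearMap.congr_fun a6 x,
      LinearMap.congr_fun a7 x, LinearMap.congr_fun a8 x, LinearMap.congr_fun a9 x⟩
  have hhc : ∀ i j, i ≠ j → ∀ x, h i (h j x) = h j (h i x) := by
    intro i j hij x
    obtain ⟨a1, a2, a3, a4, a5, a6, a7, a8, a9⟩ := hcomm i j hij x
    simp only [hh, map_sub, map_smul, a1, a2, a4, a5]
    module
  have s : SLTwo.Sys e f h G := by
    constructor
    · exact fun j => SLTwo.tri_cayley (q1 j) (q2 j) (q3 j)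
    · intro i j hij x
      obtain ⟨a1, a2, a3, a4, a5, a6, a7, a8, a9⟩ := hcomm i j hij x
      simp only [he, map_add, map_sub, map_smul, a1, a2, a3, a4, a5, a6, a7, a8, a9]
      module
    · intro i j hij x
      obtain ⟨a1, a2, a3, a4, a5, a6, a7, a8, a9⟩ := hcomm i j hij x
      simp only [he, hf, map_add, map_sub, map_smul, a1, a2, a3, a4, a5, a6, a7, a8, a9]
      module
    · intro i j hij x
      obtain ⟨a1, a2, a3, a4, a5, a6, a7, a8, a9⟩ := hcomm i j hij x
      simp only [he, hh, map_add, map_sub, map_smul, a1, a2, a3, a4, a5, a6, a7, a8, a9]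
      module
    · intro i j hij x
      obtain ⟨a1, a2, a3, a4, a5, a6, a7, a8, a9⟩ := hcomm i j hij x
      simp only [hf, map_add, map_sub, map_smul, a1, a2, a3, a4, a5, a6, a7, a8, a9]
      module
    · intro i j hij x
      obtain ⟨a1, a2, a3, a4, a5, a6, a7, a8, a9⟩ := hcomm i j hij x
      simp only [hf, hh, map_add, map_sub, map_smul, a1, a2, a3, a4, a5, a6, a7, a8, a9]
      module
    · intro i j x
      by_cases hij : i = j
      · rw [hij]
      · exact hhc i j hij x
    · intro j x
      apply SLTwo.ext_graded D.Hpq D.internal (Q := fun x => G (e j x) = e j (G x) + e j x)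
      · simp
      · intro x y hx hy
        simp only [map_add, hx, hy]; abel
      · intro p x hx
        rw [hGm p x hx, hGm _ _ (hemem j p x hx), map_smul]
        push_cast; module
    · intro j x
      apply SLTwo.ext_graded D.Hpq D.internal (Q := fun x => G (f j x) = f j (G x) - f j x)
      · simp
      · intro x y hx hy
        simp only [map_add, hx, hy]; abel
      · intro p x hx
        rw [hGm p x hx, hGm _ _ (hfmem j p x hx), map_smul]
        push_cast; module
    · intro j x
      apply SLTwo.ext_graded D.Hpq D.internal (Q := fun x => G (h j x) = h j (G x))
      · simp
      · intro x y hx hy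
        simp only [map_add, hx, hy]
      · intro p x hx
        rw [hGm p x hx, hGm _ _ (hhmem j p x hx), map_smul]
    · rw [eq_top_iff, ← D.internal.submodule_iSup_eq_top]
      refine iSup_le fun p => ?_
      rw [hG p]
      exact le_iSup (fun μ : ℂ => Module.End.eigenspace G μ) (p : ℂ)
  have uG : ∀ x ∈ U, G x ∈ U := by
    intro x hx
    rw [ug] at hx
    refine Submodule.iSup_induction (fun p => U ⊓ D.Hpq p) (motive := fun x => G x ∈ U) hx ?_ ?_ ?_
    · intro p y hy
      rw [hGm p y hy.2]; exact U.smul_mem _ hy.1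
    · simp
    · intro y z hy hz
      rw [map_add]; exact U.add_mem hy hz
  obtain ⟨U', ve, vf, vh, vG, hcompl⟩ := s.compl U
    (fun j x hx => U.smul_mem _ (U.sub_mem (U.add_mem (up j x hx) (um j x hx))
      (U.smul_mem _ (uy j x hx))))
    (fun j x hx => U.smul_mem _ (U.add_mem (U.add_mem (up j x hx) (um j x hx))
      (U.smul_mem _ (uy j x hx))))
    (fun j x hx => U.smul_mem _ (U.sub_mem (up j x hx) (um j x hx)))
  have hI : Complex.I ^ 2 = -1 := Complex.I_sq
  have vp : ∀ j, ∀ x ∈ U', D.Np j x ∈ U' := by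
    intro j x hx
    have : D.Np j x = (1 / 2 : ℂ) • (e j x + f j x + Complex.I • h j x) := by
      rw [he, hf, hh]; match_scalars <;> grind
    rw [this]
    exact U'.smul_mem _ (U'.add_mem (U'.add_mem (ve j x hx) (vf j x hx))
      (U'.smul_mem _ (vh j x hx)))
  have vm : ∀ j, ∀ x ∈ U', D.Nm j x ∈ U' := by
    intro j x hx
    have : D.Nm j x = (1 / 2 : ℂ) • (e j x + f j x - Complex.I • h j x) := by
      rw [he, hf, hh]; match_scalars <;> grind
    rw [this]
    exact U'.smul_mem _ (U'.sub_mem (U'.add_mem (ve j x hx) (vf j x hx))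
      (U'.smul_mem _ (vh j x hx)))
  have vy : ∀ j, ∀ x ∈ U', D.Y j x ∈ U' := by
    intro j x hx
    have : D.Y j x = Complex.I • (e j x - f j x) := by
      rw [he, hf]; match_scalars <;> grind
    rw [this]
    exact U'.smul_mem _ (U'.sub_mem (ve j x hx) (vf j x hx))
  -- average the projection over the real structure
  have hconj : ∀ n : ℤ, (starRingEnd ℂ) (n : ℂ) = n := fun n => map_intCast _ n
  have hcG : ∀ x, D.c (G x) = (D.k : ℂ) • D.c x - G (D.c x) := by
    intro x
    apply SLTwo.ext_graded D.Hpq D.internal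
      (Q := fun x => D.c (G x) = (D.k : ℂ) • D.c x - G (D.c x))
    · simp
    · intro x y hx hy
      simp only [map_add, hx, hy, smul_add]; abel
    · intro p x hx
      rw [hGm p x hx, hGm _ _ (D.conj_mem p x hx), LinearMap.map_smulₛₗ, hconj]
      push_cast; module
  let pr : Module.End ℂ H := U.projection U' hcompl
  have prU : ∀ x, pr x ∈ U := fun x => Submodule.projection_apply_mem hcompl x
  have prid : ∀ x ∈ U, pr x = x := fun x hx => Submodule.projection_apply_of_mem_left hcompl hx
  let cpr : Module.End ℂ H := (D.c.comp pr).comp D.c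
  have hcpr : ∀ x, cpr x = D.c (pr (D.c x)) := fun x => rfl
  let av : Module.End ℂ H := (1 / 2 : ℂ) • (pr + cpr)
  have hav : ∀ x, av x = (1 / 2 : ℂ) • (pr x + D.c (pr (D.c x))) := fun x => rfl
  have avU : ∀ x, av x ∈ U := fun x =>
    U.smul_mem _ (U.add_mem (prU x) (uc _ (prU _)))
  have avid : ∀ x ∈ U, av x = x := by
    intro x hx
    rw [hav, prid x hx, prid _ (uc x hx), D.c_invol]; module
  have avcomm : ∀ A : Module.End ℂ H, (∀ x, D.c (A x) = A (D.c x)) → (∀ x ∈ U, A x ∈ U) →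
      (∀ x ∈ U', A x ∈ U') → ∀ x, av x = 0 → av (A x) = 0 := by
    intro A hA h1 h2 x hx
    have hp : ∀ x, pr (A x) = A (pr x) := SLTwo.proj_comm hcompl A h1 h2
    have : av (A x) = A (av x) := by
      rw [hav, hav, hA, hp, hp, hA, map_smul, map_add]
    rw [this, hx, map_zero]
  have avG : ∀ x, av x = 0 → av (G x) = 0 := by
    intro x hx
    have hp : ∀ x, pr (G x) = G (pr x) := SLTwo.proj_comm hcompl G uG vG
    have : av (G x) = G (av x) := by
      rw [hav, hav, hcG, map_sub, map_smul, hp, hp, map_sub, hcG, LinearMap.map_smulₛₗ,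
        hconj, map_smul, map_add]
      module
    rw [this, hx, map_zero]
  refine ⟨LinearMap.ker av, ⟨?_, ?_, ?_, ?_, ?_⟩, ?_⟩
  · intro x hx
    rw [LinearMap.mem_ker] at hx ⊢
    have h1 : D.c (av x) = av (D.c x) := by
      rw [hav, hav, LinearMap.map_smulₛₗ, map_add, D.c_invol, D.c_invol, add_comm]
      have h2 : (starRingEnd ℂ) (1 / 2 : ℂ) = 1 / 2 := by
        rw [map_div₀, map_one, map_ofNat]
      rw [h2]
    rw [← h1, hx, map_zero]
  · exact fun j x hx => avcomm _ (D.c_comm_Np j) (up j) (vp j) x hx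
  · exact fun j x hx => avcomm _ (D.c_comm_Nm j) (um j) (vm j) x hx
  · exact fun j x hx => avcomm _ (D.c_comm_Y j) (uy j) (vy j) x hx
  · exact SLTwo.graded_of_stable D.Hpq D.internal G hG _ fun x hx => avG x hx
  · have h1 := LinearMap.isCompl_of_proj (p := U) (f := av.codRestrict U avU)
      (fun x => Subtype.ext (avid x x.2))
    rwa [LinearMap.ker_codRestrict] at h1
end
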